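/- Let R > 0, C > 0, and let v be a C² positive function on the punctured disk {z ∈ ℝ² : 0 < |z| < R} satisfying 0 ≤ -Δv ≤ C·e^{2v} there. Then either v extends to a C¹ function on a neighborhood of the origin, or there exists a finite positive number m₁ such that v(z)/log(1/|z|) → m₁ as |z| → 0⁺. -/

import Mathlib

open MeasureTheory Filter Metric
open scoped ENNReal

/-- The Euclidean Laplacian of a function on `ℝ²`:
`Δv = ∂²v/∂x² + ∂²v/∂y²`. -/
noncomputable def lap (v : EuclideanSpace ℝ (Fin 2) → ℝ)
    (z : EuclideanSpace ℝ (Fin 2)) : ℝ :=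
  fderiv ℝ (fun w => fderiv ℝ v w (EuclideanSpace.single 0 1)) z (EuclideanSpace.single 0 1) +
  fderiv ℝ (fun w => fderiv ℝ v w (EuclideanSpace.single 1 1)) z (EuclideanSpace.single 1 1)

/-- The Euclidean plane. -/
abbrev Plane := EuclideanSpace ℝ (Fin 2)

/-- The partial derivative in the `i`-th coordinate direction. -/
noncomputable def pd (i : Fin 2) (f : Plane → ℝ) (z : Plane) : ℝ :=
  fderiv ℝ f z (EuclideanSpace.single i 1)

theorem lap_eq_pd (f : Plane → ℝ) (z : Plane) :
    lap f z = pd 0 (pd 0 f) z + pd 1 (pd 1 f) z := rfl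

theorem pd_congr {f g : Plane → ℝ} {z : Plane} (i : Fin 2) (h : f =ᶠ[nhds z] g) :
    pd i f =ᶠ[nhds z] pd i g := by
  filter_upwards [h.fderiv (𝕜 := ℝ)] with w hw
  simp only [pd, hw]

theorem lap_congr {f g : Plane → ℝ} {z : Plane} (h : f =ᶠ[nhds z] g) : lap f z = lap g z := by
  rw [lap_eq_pd, lap_eq_pd, (pd_congr 0 (pd_congr 0 h)).self_of_nhds,
    (pd_congr 1 (pd_congr 1 h)).self_of_nhds]

theorem contDiffAt_pd {f : Plane → ℝ} {z : Plane} {m n : ℕ} (i : Fin 2)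
    (h : ContDiffAt ℝ n f z) (hmn : m + 1 ≤ n) : ContDiffAt ℝ m (pd i f) z :=
  (h.fderiv_right (m := m) (mod_cast hmn)).clm_apply contDiffAt_const

theorem pd_mul {f g : Plane → ℝ} {z : Plane} (i : Fin 2) (hf : DifferentiableAt ℝ f z)
    (hg : DifferentiableAt ℝ g z) :
    pd i (fun w => f w * g w) z = f z * pd i g z + g z * pd i f z := by
  simp [pd, fderiv_fun_mul hf hg]

theorem eventually_differentiableAt {f : Plane → ℝ} {z : Plane} (h : ContDiffAt ℝ 2 f z) :
    ∀ᶠ w in nhds z, DifferentiableAt ℝ f w := by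
  filter_upwards [h.eventually (by simp)] with w hw using hw.differentiableAt (by norm_num)

theorem differentiableAt_pd {f : Plane → ℝ} {z : Plane} (i : Fin 2) (h : ContDiffAt ℝ 2 f z) :
    DifferentiableAt ℝ (pd i f) z :=
  (contDiffAt_pd (m := 1) (n := 2) i h le_rfl).differentiableAt (by norm_num)

theorem pd_add {f g : Plane → ℝ} {z : Plane} (i : Fin 2) (hf : DifferentiableAt ℝ f z)
    (hg : DifferentiableAt ℝ g z) :
    pd i (fun w => f w + g w) z = pd i f z + pd i g z := by
  simp [pd, fderiv_fun_add hf hg]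

theorem pd_pd_mul {f g : Plane → ℝ} {z : Plane} (i : Fin 2) (hf : ContDiffAt ℝ 2 f z)
    (hg : ContDiffAt ℝ 2 g z) :
    pd i (pd i (fun w => f w * g w)) z =
      f z * pd i (pd i g) z + 2 * (pd i f z * pd i g z) + g z * pd i (pd i f) z := by
  have h : pd i (fun w => f w * g w) =ᶠ[nhds z] fun w => f w * pd i g w + g w * pd i f w := by
    filter_upwards [eventually_differentiableAt hf, eventually_differentiableAt hg] with w h1 h2
      using pd_mul i h1 h2
  have df := hf.differentiableAt (by norm_num : (2 : WithTop ℕ∞) ≠ 0)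
  have dg := hg.differentiableAt (by norm_num : (2 : WithTop ℕ∞) ≠ 0)
  have df' := differentiableAt_pd i hf
  have dg' := differentiableAt_pd i hg
  rw [(pd_congr i h).self_of_nhds, pd_add i (df.fun_mul dg') (dg.fun_mul df'), pd_mul i df dg',
    pd_mul i dg df']
  ring

theorem lap_mul {f g : Plane → ℝ} {z : Plane} (hf : ContDiffAt ℝ 2 f z)
    (hg : ContDiffAt ℝ 2 g z) :
    lap (fun w => f w * g w) z =
      f z * lap g z + 2 * (pd 0 f z * pd 0 g z + pd 1 f z * pd 1 g z) + g z * lap f z := by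
  rw [lap_eq_pd, pd_pd_mul 0 hf hg, pd_pd_mul 1 hf hg, lap_eq_pd, lap_eq_pd]
  ring

theorem continuousAt_lap {f : Plane → ℝ} {z : Plane} (h : ContDiffAt ℝ 2 f z) :
    ContinuousAt (lap f) z := by
  have h1 (i : Fin 2) : ContinuousAt (pd i (pd i f)) z :=
    (contDiffAt_pd (m := 0) (n := 1) i (contDiffAt_pd (m := 1) (n := 2) i h le_rfl)
      le_rfl).continuousAt
  exact (h1 0).add (h1 1)

/-- First derivative of a function of the squared norm. -/
theorem pd_radial {H : ℝ → ℝ} {H' : ℝ} {z : Plane} (i : Fin 2)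
    (h : HasDerivAt H H' (‖z‖ ^ 2)) : pd i (fun w => H (‖w‖ ^ 2)) z = 2 * z i * H' := by
  have h1 := h.comp_hasFDerivAt z (hasStrictFDerivAt_norm_sq z).hasFDerivAt
  have h2 : HasFDerivAt (fun w : Plane => H (‖w‖ ^ 2)) _ z := h1
  rw [pd, h2.fderiv]
  simp [EuclideanSpace.inner_single_right]
  ring

theorem lap_radial {H H' : ℝ → ℝ} {H'' : ℝ} {z : Plane}
    (h : ∀ᶠ q in nhds (‖z‖ ^ 2), HasDerivAt H (H' q) q)
    (h' : HasDerivAt H' H'' (‖z‖ ^ 2)) :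
    lap (fun w => H (‖w‖ ^ 2)) z = 4 * H' (‖z‖ ^ 2) + 4 * ‖z‖ ^ 2 * H'' := by
  have hn : Tendsto (fun w : Plane => ‖w‖ ^ 2) (nhds z) (nhds (‖z‖ ^ 2)) :=
    (continuous_norm.pow 2).continuousAt
  have h2 (i : Fin 2) : pd i (pd i (fun w => H (‖w‖ ^ 2))) z =
      2 * H' (‖z‖ ^ 2) + 4 * (z i) ^ 2 * H'' := by
    have e : pd i (fun w => H (‖w‖ ^ 2)) =ᶠ[nhds z] fun w => (2 * w i) * H' (‖w‖ ^ 2) := by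
      filter_upwards [hn.eventually h] with w hw using pd_radial i hw
    have d1 : HasFDerivAt (fun w : Plane => 2 * w i)
        ((2 : ℝ) • (EuclideanSpace.proj i : Plane →L[ℝ] ℝ)) z :=
      ((EuclideanSpace.proj i : Plane →L[ℝ] ℝ).hasFDerivAt).const_mul 2
    have d2 : DifferentiableAt ℝ (fun w : Plane => H' (‖w‖ ^ 2)) z :=
      (h'.comp_hasFDerivAt z (hasStrictFDerivAt_norm_sq z).hasFDerivAt).differentiableAt
    rw [(pd_congr i e).self_of_nhds, pd_mul i d1.differentiableAt d2, pd_radial i h']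
    simp only [pd, d1.fderiv]
    simp
    ring
  have hz : ‖z‖ ^ 2 = z 0 ^ 2 + z 1 ^ 2 := by
    simp [EuclideanSpace.norm_sq_eq]
  rw [lap_eq_pd, h2, h2, hz]
  ring

/-! ### Integration by parts away from the origin -/

theorem continuous_mul_of_zero_notMem_tsupport {a b : Plane → ℝ}
    (ha : ∀ z, z ≠ 0 → ContinuousAt a z) (hb : Continuous b) (h0 : (0 : Plane) ∉ tsupport b) :
    Continuous fun z => a z * b z := by
  refine continuous_of_tsupport fun x hx => ?_
  have hx' : x ∈ tsupport b := tsupport_mul_subset_right hx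
  exact (ha x (fun h => h0 (h ▸ hx'))).mul hb.continuousAt

theorem integrable_mul_of_zero_notMem_tsupport {a b : Plane → ℝ}
    (ha : ∀ z, z ≠ 0 → ContinuousAt a z) (hs : HasCompactSupport a)
    (hb : Continuous b) (h0 : (0 : Plane) ∉ tsupport b) :
    Integrable fun z => a z * b z :=
  (continuous_mul_of_zero_notMem_tsupport ha hb h0).integrable_of_hasCompactSupport hs.mul_right

theorem tsupport_pd_subset (i : Fin 2) (f : Plane → ℝ) : tsupport (pd i f) ⊆ tsupport f :=
  tsupport_fderiv_apply_subset ℝ _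

theorem hasCompactSupport_pd {f : Plane → ℝ} (i : Fin 2) (h : HasCompactSupport f) :
    HasCompactSupport (pd i f) :=
  h.fderiv_apply ℝ _

theorem integral_mul_pd_eq_neg {a b : Plane → ℝ} (i : Fin 2)
    (ha : ∀ z, z ≠ 0 → ContDiffAt ℝ 1 a z) (hs : HasCompactSupport a)
    (hb : ContDiff ℝ 1 b) (h0 : (0 : Plane) ∉ tsupport b) :
    ∫ z, a z * pd i b z = -∫ z, pd i a z * b z := by
  have hpb : Continuous (pd i b) := continuous_iff_continuousAt.2 fun z =>
    (contDiffAt_pd (m := 0) (n := 1) i hb.contDiffAt le_rfl).continuousAt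
  refine integral_mul_fderiv_eq_neg_fderiv_mul_of_integrable ?_ ?_ ?_ ?_ ?_
  · exact integrable_mul_of_zero_notMem_tsupport
      (fun z hz => (contDiffAt_pd (m := 0) (n := 1) i (ha z hz) le_rfl).continuousAt)
      (hasCompactSupport_pd i hs) hb.continuous h0
  · exact integrable_mul_of_zero_notMem_tsupport (fun z hz => (ha z hz).continuousAt) hs hpb
      (fun h => h0 (tsupport_pd_subset i b h))
  · exact integrable_mul_of_zero_notMem_tsupport (fun z hz => (ha z hz).continuousAt) hs
      hb.continuous h0
  · exact fun x hx => (ha x (fun h => h0 (h ▸ hx))).differentiableAt (by norm_num)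
  · exact fun x _ => (hb.differentiable (by norm_num)).differentiableAt

/-- Green's second identity for a test function vanishing near the origin. -/
theorem integral_mul_lap {a b : Plane → ℝ}
    (ha : ∀ z, z ≠ 0 → ContDiffAt ℝ 2 a z) (hs : HasCompactSupport a)
    (hb : ContDiff ℝ 2 b) (h0 : (0 : Plane) ∉ tsupport b) :
    ∫ z, a z * lap b z = ∫ z, lap a z * b z := by
  have hpb (i : Fin 2) : ContDiff ℝ 1 (pd i b) := contDiff_iff_contDiffAt.2 fun z =>
    contDiffAt_pd (m := 1) (n := 2) i hb.contDiffAt le_rfl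
  have hppb (i : Fin 2) : Continuous (pd i (pd i b)) := continuous_iff_continuousAt.2 fun z =>
    (contDiffAt_pd (m := 0) (n := 1) i (hpb i).contDiffAt le_rfl).continuousAt
  have hpa (i : Fin 2) : ∀ z, z ≠ 0 → ContDiffAt ℝ 1 (pd i a) z := fun z hz =>
    contDiffAt_pd (m := 1) (n := 2) i (ha z hz) le_rfl
  have h0' (i : Fin 2) : (0 : Plane) ∉ tsupport (pd i b) := fun h => h0 (tsupport_pd_subset i b h)
  have h0'' (i : Fin 2) : (0 : Plane) ∉ tsupport (pd i (pd i b)) :=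
    fun h => h0' i (tsupport_pd_subset i _ h)
  have key (i : Fin 2) : ∫ z, a z * pd i (pd i b) z = ∫ z, pd i (pd i a) z * b z := by
    rw [integral_mul_pd_eq_neg i (fun z hz => (ha z hz).of_le (by norm_num)) hs (hpb i) (h0' i),
      integral_mul_pd_eq_neg i (hpa i) (hasCompactSupport_pd i hs) (hb.of_le (by norm_num)) h0,
      neg_neg]
  simp only [lap_eq_pd, mul_add, add_mul]
  rw [integral_add, integral_add, key 0, key 1]
  iterate 2
    exact integrable_mul_of_zero_notMem_tsupport
      (fun z hz => (contDiffAt_pd (m := 0) (n := 1) _ (hpa _ z hz) le_rfl).continuousAt)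
      (hasCompactSupport_pd _ (hasCompactSupport_pd _ hs)) hb.continuous h0
  iterate 2
    exact integrable_mul_of_zero_notMem_tsupport (fun z hz => (ha z hz).continuousAt) hs
      (hppb _) (h0'' _)

/-! ### A logarithmic cutoff function -/

theorem hasDerivAt_max_zero_pow (n : ℕ) (s : ℝ) :
    HasDerivAt (fun s : ℝ => max s 0 ^ (n + 2)) ((n + 2) * max s 0 ^ (n + 1)) s := by
  rcases lt_trichotomy s 0 with hs | rfl | hs
  · have h : (fun s : ℝ => max s 0 ^ (n + 2)) =ᶠ[nhds s] fun _ => 0 := by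
      filter_upwards [Iio_mem_nhds hs] with t ht
      simp [max_eq_right (Set.mem_Iio.1 ht).le]
    simpa [max_eq_right hs.le] using (hasDerivAt_const s (0 : ℝ)).congr_of_eventuallyEq h
  · have h : (fun s : ℝ => max s 0 ^ (n + 2)) =O[nhds 0] fun s => ‖s - 0‖ ^ (n + 2) := by
      refine Asymptotics.IsBigO.of_bound 1 (Eventually.of_forall fun t => ?_)
      simp only [norm_pow, one_mul, sub_zero, norm_norm]
      gcongr
      rw [Real.norm_eq_abs, Real.norm_eq_abs, abs_of_nonneg (le_max_right _ _)]
      exact max_le (le_abs_self _) (abs_nonneg _)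
    simpa [hasDerivAt_iff_hasFDerivAt] using h.hasFDerivAt (𝕜 := ℝ) (by omega)
  · have h : (fun s : ℝ => max s 0 ^ (n + 2)) =ᶠ[nhds s] fun s => s ^ (n + 2) := by
      filter_upwards [Ioi_mem_nhds hs] with t ht
      rw [max_eq_left (Set.mem_Ioi.1 ht).le]
    rw [max_eq_left hs.le]
    convert! (hasDerivAt_pow (n + 2) s).congr_of_eventuallyEq h using 1
    push_cast
    rfl

theorem contDiff_max_zero_pow_three : ContDiff ℝ 2 (fun s : ℝ => max s 0 ^ 3) := by
  have h1 : deriv (fun s : ℝ => max s 0 ^ 3) = fun s => 3 * max s 0 ^ 2 := by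
    ext s
    rw [(hasDerivAt_max_zero_pow 1 s).deriv]
    norm_num
  have h2 : deriv (fun s : ℝ => 3 * max s 0 ^ 2) = fun s => 6 * max s 0 := by
    ext s
    rw [((hasDerivAt_max_zero_pow 0 s).const_mul 3).deriv]
    norm_num
    ring
  rw [show (2 : WithTop ℕ∞) = 1 + 1 by norm_num, contDiff_succ_iff_deriv]
  refine ⟨fun s => (hasDerivAt_max_zero_pow 1 s).differentiableAt, by simp, ?_⟩
  rw [h1, contDiff_one_iff_deriv, h2]
  exact ⟨fun s => ((hasDerivAt_max_zero_pow 0 s).const_mul 3).differentiableAt, by fun_prop⟩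

/-- The argument `1 + log |z|² / k` of the logarithmic cutoff, as a function of `q = |z|²`. -/
noncomputable def cutArg (k q : ℝ) : ℝ := max (1 + Real.log q / k) 0

/-- A radial subharmonic `C²` function vanishing for `|z|² ≤ exp (-k)` and tending to `1` away
from the origin as `k → ∞`. -/
noncomputable def cutoff (k : ℝ) (z : Plane) : ℝ := if z = 0 then 0 else cutArg k (‖z‖ ^ 2) ^ 3

theorem cutArg_nonneg (k q : ℝ) : 0 ≤ cutArg k q := le_max_right _ _

theorem cutArg_le_one {k q : ℝ} (hk : 0 < k) (hq : 0 ≤ q) (hq1 : q ≤ 1) : cutArg k q ≤ 1 := by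
  refine max_le ?_ zero_le_one
  have := div_nonpos_of_nonpos_of_nonneg (Real.log_nonpos hq hq1) hk.le
  linarith

theorem cutoff_nonneg (k : ℝ) (z : Plane) : 0 ≤ cutoff k z := by
  unfold cutoff
  split_ifs
  · exact le_rfl
  · exact pow_nonneg (cutArg_nonneg _ _) 3

theorem cutoff_le_one {k : ℝ} (hk : 0 < k) {z : Plane} (hz : ‖z‖ ≤ 1) : cutoff k z ≤ 1 := by
  unfold cutoff
  split_ifs
  · exact zero_le_one
  · exact pow_le_one₀ (cutArg_nonneg _ _)
      (cutArg_le_one hk (by positivity) (pow_le_one₀ (norm_nonneg _) hz))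

theorem tendsto_cutoff {z : Plane} (hz : z ≠ 0) :
    Tendsto (fun n : ℕ => cutoff ((n : ℝ) + 1) z) atTop (nhds 1) := by
  have h : Tendsto (fun n : ℕ => max (1 + Real.log (‖z‖ ^ 2) / ((n : ℝ) + 1)) 0 ^ 3) atTop
      (nhds (max (1 + 0) 0 ^ 3)) := by
    refine ((tendsto_const_nhds.add ?_).max tendsto_const_nhds).pow 3
    exact tendsto_const_nhds.div_atTop
      (tendsto_natCast_atTop_atTop.atTop_add tendsto_const_nhds)
  simpa [cutoff, hz, cutArg] using h

theorem cutoff_eventually_zero {k : ℝ} (hk : 0 < k) :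
    ∀ᶠ z in nhds (0 : Plane), cutoff k z = 0 := by
  have hn : Tendsto (fun w : Plane => ‖w‖ ^ 2) (nhds 0) (nhds 0) := by
    simpa using ((continuous_norm (E := Plane)).fun_pow 2).tendsto 0
  filter_upwards [hn.eventually (gt_mem_nhds (Real.exp_pos (-k)))] with z hz
  unfold cutoff
  split_ifs with h
  · rfl
  · have h1 : Real.log (‖z‖ ^ 2) < -k := by
      rw [Real.log_lt_iff_lt_exp (by positivity)]
      exact hz
    have h2 : Real.log (‖z‖ ^ 2) / k ≤ -1 := by
      rw [div_le_iff₀ hk]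
      linarith
    rw [cutArg, max_eq_right (by linarith)]
    norm_num

theorem cutoff_eventuallyEq {k : ℝ} {z : Plane} (hz : z ≠ 0) :
    cutoff k =ᶠ[nhds z] fun w => cutArg k (‖w‖ ^ 2) ^ 3 := by
  filter_upwards [isOpen_compl_singleton.mem_nhds (show z ∈ ({0} : Set Plane)ᶜ from hz)] with w hw
  simp [cutoff, show w ≠ 0 from hw]

theorem contDiffAt_cutoff {k : ℝ} {z : Plane} (hz : z ≠ 0) : ContDiffAt ℝ 2 (cutoff k) z := by
  refine ContDiffAt.congr_of_eventuallyEq ?_ (cutoff_eventuallyEq hz)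
  refine contDiff_max_zero_pow_three.contDiffAt.comp z (contDiffAt_const.add ?_)
  refine ((contDiff_norm_sq ℝ).contDiffAt.log ?_).div_const k
  positivity

theorem hasDerivAt_cutArg_pow {k q : ℝ} (n : ℕ) (hq : q ≠ 0) :
    HasDerivAt (fun q => cutArg k q ^ (n + 2))
      ((n + 2) * cutArg k q ^ (n + 1) * (1 / (k * q))) q := by
  have h1 : HasDerivAt (fun q => 1 + Real.log q / k) (1 / (k * q)) q := by
    convert! ((Real.hasDerivAt_log hq).div_const k).const_add 1 using 1
    field_simp
  exact (hasDerivAt_max_zero_pow n (1 + Real.log q / k)).comp q h1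

theorem pd_cutoff {k : ℝ} {z : Plane} (i : Fin 2) (hz : z ≠ 0) :
    pd i (cutoff k) z = 6 * z i * cutArg k (‖z‖ ^ 2) ^ 2 / (k * ‖z‖ ^ 2) := by
  have hq : ‖z‖ ^ 2 ≠ 0 := by positivity
  rw [(pd_congr i (cutoff_eventuallyEq hz)).self_of_nhds,
    pd_radial i (hasDerivAt_cutArg_pow 1 hq)]
  push_cast
  ring

theorem lap_cutoff {k : ℝ} {z : Plane} (hk : k ≠ 0) (hz : z ≠ 0) :
    lap (cutoff k) z = 24 * cutArg k (‖z‖ ^ 2) / (k ^ 2 * ‖z‖ ^ 2) := by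
  have hq : ‖z‖ ^ 2 ≠ 0 := by positivity
  have h2 := ((hasDerivAt_cutArg_pow (k := k) 0 hq).const_mul 3).mul
    (((hasDerivAt_id (‖z‖ ^ 2)).const_mul k).fun_inv (mul_ne_zero hk hq))
  rw [lap_congr (cutoff_eventuallyEq hz),
    lap_radial (H := fun q => cutArg k q ^ 3)
      (H' := fun q => 3 * cutArg k q ^ 2 * (k * q)⁻¹) _ h2]
  · simp only [id]
    field_simp
    push_cast
    ring
  · filter_upwards [isOpen_compl_singleton.mem_nhds (show ‖z‖ ^ 2 ∈ ({0} : Set ℝ)ᶜ from hq)]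
      with q hq'
    convert! hasDerivAt_cutArg_pow 1 hq' using 1
    push_cast
    field_simp
    ring

theorem abs_coord_le_norm (z : Plane) (i : Fin 2) : |z i| ≤ ‖z‖ :=
  PiLp.norm_apply_le z i

theorem abs_pd_cutoff_le {k : ℝ} (hk : 0 < k) {z : Plane} (i : Fin 2) (hz : z ≠ 0)
    (hz1 : ‖z‖ ≤ 1) : |pd i (cutoff k) z| ≤ 6 / (k * ‖z‖) := by
  have hn : 0 < ‖z‖ := norm_pos_iff.2 hz
  have h1 := abs_coord_le_norm z i
  have h2 := cutArg_nonneg k (‖z‖ ^ 2)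
  have h3 : cutArg k (‖z‖ ^ 2) ^ 2 ≤ 1 :=
    pow_le_one₀ h2 (cutArg_le_one hk (by positivity) (pow_le_one₀ hn.le hz1))
  rw [pd_cutoff i hz, abs_div, abs_mul, abs_mul, abs_of_nonneg (by positivity : (0:ℝ) ≤ 6),
    abs_of_nonneg (by positivity : 0 ≤ cutArg k (‖z‖ ^ 2) ^ 2),
    abs_of_pos (by positivity : 0 < k * ‖z‖ ^ 2), div_le_div_iff₀ (by positivity) (by positivity)]
  calc 6 * |z i| * cutArg k (‖z‖ ^ 2) ^ 2 * (k * ‖z‖) ≤ 6 * ‖z‖ * 1 * (k * ‖z‖) := by gcongr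
    _ = _ := by ring

theorem lap_cutoff_nonneg {k : ℝ} (hk : 0 < k) {z : Plane} (hz : z ≠ 0) :
    0 ≤ lap (cutoff k) z := by
  rw [lap_cutoff hk.ne' hz]
  have := cutArg_nonneg k (‖z‖ ^ 2)
  positivity

theorem lap_cutoff_le {k : ℝ} (hk : 0 < k) {z : Plane} (hz : z ≠ 0) (hz1 : ‖z‖ ≤ 1) :
    lap (cutoff k) z ≤ 24 / (k ^ 2 * ‖z‖ ^ 2) := by
  have hn : 0 < ‖z‖ := norm_pos_iff.2 hz
  rw [lap_cutoff hk.ne' hz]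
  gcongr
  have := cutArg_le_one hk (by positivity : 0 ≤ ‖z‖ ^ 2) (pow_le_one₀ hn.le hz1)
  linarith

theorem zero_notMem_tsupport_mul_cutoff {k : ℝ} (hk : 0 < k) (a : Plane → ℝ) :
    (0 : Plane) ∉ tsupport fun z => a z * cutoff k z := by
  rw [notMem_tsupport_iff_eventuallyEq]
  filter_upwards [cutoff_eventually_zero hk] with z hz
  simp [hz]

theorem contDiff_mul_cutoff {k : ℝ} (hk : 0 < k) {a : Plane → ℝ}
    (ha : ∀ z, z ≠ 0 → ContDiffAt ℝ 2 a z) : ContDiff ℝ 2 fun z => a z * cutoff k z := by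
  refine contDiff_iff_contDiffAt.2 fun z => ?_
  by_cases hz : z = 0
  · subst hz
    refine (contDiffAt_const (c := (0 : ℝ))).congr_of_eventuallyEq ?_
    filter_upwards [cutoff_eventually_zero hk] with z hz
    simp [hz]
  · exact (ha z hz).mul (contDiffAt_cutoff hz)

theorem contDiffAt_norm_two {z : Plane} (hz : z ≠ 0) :
    ContDiffAt ℝ 2 (fun w : Plane => ‖w‖) z := contDiffAt_norm ℝ hz

theorem norm_eq_sqrt_sq : (fun w : Plane => ‖w‖) = fun w => Real.sqrt (‖w‖ ^ 2) := by
  ext w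
  rw [Real.sqrt_sq (norm_nonneg w)]

theorem pd_norm {z : Plane} (i : Fin 2) (hz : z ≠ 0) :
    pd i (fun w => ‖w‖) z = z i / ‖z‖ := by
  have hq : ‖z‖ ^ 2 ≠ 0 := by positivity
  rw [norm_eq_sqrt_sq, pd_radial i (Real.hasDerivAt_sqrt hq), Real.sqrt_sq (norm_nonneg z)]
  field_simp

theorem lap_norm {z : Plane} (hz : z ≠ 0) : lap (fun w => ‖w‖) z = 1 / ‖z‖ := by
  have hn : 0 < ‖z‖ := norm_pos_iff.2 hz
  have hq : ‖z‖ ^ 2 ≠ 0 := by positivity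
  have h2 := ((Real.hasDerivAt_sqrt hq).const_mul 2).fun_inv
    (by rw [Real.sqrt_sq hn.le]; positivity)
  rw [norm_eq_sqrt_sq, lap_radial (H := Real.sqrt) (H' := fun q => (2 * Real.sqrt q)⁻¹) _ h2]
  · simp only [Real.sqrt_sq hn.le]
    field_simp
    ring
  · filter_upwards [isOpen_compl_singleton.mem_nhds (show ‖z‖ ^ 2 ∈ ({0} : Set ℝ)ᶜ from hq)]
      with q hq'
    simpa using Real.hasDerivAt_sqrt hq'

theorem cutoff_div_norm_le_lap {k : ℝ} (hk : 0 < k) {z : Plane} (hz : z ≠ 0) :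
    cutoff k z / ‖z‖ ≤ lap (fun w => ‖w‖ * cutoff k w) z := by
  have hn : 0 < ‖z‖ := norm_pos_iff.2 hz
  rw [lap_mul (contDiffAt_norm_two hz) (contDiffAt_cutoff hz), lap_norm hz, pd_norm 0 hz,
    pd_norm 1 hz, pd_cutoff 0 hz, pd_cutoff 1 hz]
  have h1 : 0 ≤ ‖z‖ * lap (cutoff k) z := mul_nonneg hn.le (lap_cutoff_nonneg hk hz)
  have h2 : 0 ≤ 2 * (z 0 / ‖z‖ * (6 * z 0 * cutArg k (‖z‖ ^ 2) ^ 2 / (k * ‖z‖ ^ 2)) +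
      z 1 / ‖z‖ * (6 * z 1 * cutArg k (‖z‖ ^ 2) ^ 2 / (k * ‖z‖ ^ 2))) := by
    have : 2 * (z 0 / ‖z‖ * (6 * z 0 * cutArg k (‖z‖ ^ 2) ^ 2 / (k * ‖z‖ ^ 2)) +
      z 1 / ‖z‖ * (6 * z 1 * cutArg k (‖z‖ ^ 2) ^ 2 / (k * ‖z‖ ^ 2))) =
      12 * (z 0 ^ 2 + z 1 ^ 2) * cutArg k (‖z‖ ^ 2) ^ 2 / (k * ‖z‖ ^ 3) := by
      field_simp
      ring
    rw [this]
    positivity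
  rw [mul_one_div]
  linarith

/-! ### Positive functions, superharmonic near an isolated singularity -/

/-- `ψ` is nonnegative and `C²` away from the origin, vanishes for `|z| ≥ 1/2`, and is
superharmonic on the punctured disk of radius `r`. -/
structure IsProfile (ψ : Plane → ℝ) (r : ℝ) : Prop where
  pos : 0 < r
  smooth : ∀ z, z ≠ 0 → ContDiffAt ℝ 2 ψ z
  nonneg : ∀ z, z ≠ 0 → 0 ≤ ψ z
  supp : ∀ z, 1 / 2 ≤ ‖z‖ → ψ z = 0
  superharmonic : ∀ z, z ≠ 0 → ‖z‖ < r → lap ψ z ≤ 0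

theorem integrable_of_cutoff {g : Plane → ℝ} {σ : ℕ → Plane → ℝ} {B : ℝ}
    (hg : ∀ᵐ z, 0 ≤ g z) (hgm : AEStronglyMeasurable g volume) (hσ : ∀ n z, 0 ≤ σ n z)
    (hσ1 : ∀ᵐ z, Tendsto (fun n => σ n z) atTop (nhds 1))
    (hi : ∀ n, Integrable fun z => g z * σ n z) (hB : ∀ n, ∫ z, g z * σ n z ≤ B) :
    Integrable g := by
  refine ⟨hgm, ?_⟩
  have h1 (n : ℕ) : ∫⁻ z, ENNReal.ofReal (g z * σ n z) ≤ ENNReal.ofReal B := by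
    rw [← ofReal_integral_eq_lintegral_ofReal (hi n)]
    · exact ENNReal.ofReal_le_ofReal (hB n)
    · filter_upwards [hg] with z hz using mul_nonneg hz (hσ n z)
  rw [hasFiniteIntegral_iff_ofReal hg]
  calc ∫⁻ z, ENNReal.ofReal (g z)
      = ∫⁻ z, liminf (fun n => ENNReal.ofReal (g z * σ n z)) atTop := by
        refine lintegral_congr_ae ?_
        filter_upwards [hσ1] with z hz
        have := (ENNReal.continuous_ofReal.tendsto _).comp (hz.const_mul (g z))
        rw [mul_one] at this
        exact this.liminf_eq.symm
    _ ≤ liminf (fun n => ∫⁻ z, ENNReal.ofReal (g z * σ n z)) atTop :=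
        lintegral_liminf_le' fun n => (hi n).aestronglyMeasurable.aemeasurable.ennreal_ofReal
    _ ≤ ENNReal.ofReal B := liminf_le_of_le (by isBoundedDefault) fun b hb => by
        obtain ⟨n, hn⟩ := hb.exists
        exact hn.trans (h1 n)
    _ < ⊤ := ENNReal.ofReal_lt_top

theorem ae_ne_zero : ∀ᵐ z : Plane, z ≠ 0 := by
  simp [ae_iff, measure_singleton]

theorem aestronglyMeasurable_of_continuousAt {g : Plane → ℝ}
    (h : ∀ z, z ≠ 0 → ContinuousAt g z) : AEStronglyMeasurable g volume := by
  have h1 : ContinuousOn g ({0}ᶜ : Set Plane) := fun z hz => (h z hz).continuousWithinAt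
  have h2 := h1.aestronglyMeasurable (μ := volume) (measurableSet_singleton 0).compl
  rwa [Measure.restrict_eq_self_of_ae_mem] at h2
  exact ae_ne_zero

namespace IsProfile

variable {ψ : Plane → ℝ} {r : ℝ}

theorem hasCompactSupport (h : IsProfile ψ r) : HasCompactSupport ψ := by
  refine HasCompactSupport.intro (isCompact_closedBall 0 (1 / 2)) fun z hz => h.supp z ?_
  simpa using (not_le.1 (fun hn => hz (by simpa using hn))).le

theorem lap_eq_zero (h : IsProfile ψ r) {z : Plane} (hz : 1 / 2 < ‖z‖) : lap ψ z = 0 := by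
  have : ψ =ᶠ[nhds z] fun _ => 0 := by
    filter_upwards [continuous_norm.continuousAt.eventually (lt_mem_nhds hz)] with w hw
      using h.supp w hw.le
  rw [lap_congr this]
  simp [lap]

theorem continuousAt_lap (h : IsProfile ψ r) {z : Plane} (hz : z ≠ 0) :
    ContinuousAt (lap ψ) z := _root_.continuousAt_lap (h.smooth z hz)

theorem hasCompactSupport_lap (h : IsProfile ψ r) : HasCompactSupport (lap ψ) := by
  refine HasCompactSupport.intro (isCompact_closedBall 0 (1 / 2)) fun z hz => h.lap_eq_zero ?_
  simpa using hz

theorem green (h : IsProfile ψ r) {k : ℝ} (hk : 0 < k) {a : Plane → ℝ}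
    (ha : ∀ z, z ≠ 0 → ContDiffAt ℝ 2 a z) :
    ∫ z, ψ z * lap (fun w => a w * cutoff k w) z = ∫ z, lap ψ z * (a z * cutoff k z) :=
  integral_mul_lap h.smooth h.hasCompactSupport (contDiff_mul_cutoff hk ha)
    (zero_notMem_tsupport_mul_cutoff hk a)

theorem integrableOn_lap_compl_ball (h : IsProfile ψ r) :
    IntegrableOn (lap ψ) (ball 0 r)ᶜ := by
  have h1 : IntegrableOn (lap ψ) (closedBall 0 1 \ ball 0 r) := by
    refine ContinuousOn.integrableOn_compact
      ((isCompact_closedBall (0 : Plane) 1).diff isOpen_ball) fun z hz => ?_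
    refine (h.continuousAt_lap ?_).continuousWithinAt
    rintro rfl
    exact hz.2 (mem_ball_self h.pos)
  have h2 : IntegrableOn (lap ψ) (closedBall 0 1)ᶜ := by
    refine (integrableOn_zero (s := (closedBall (0 : Plane) 1)ᶜ) (μ := volume)
      (ε' := ℝ)).congr_fun (fun z hz => ?_)
      measurableSet_closedBall.compl
    have : 1 < ‖z‖ := by simpa using hz
    exact (h.lap_eq_zero (by linarith)).symm
  refine (h1.union h2).mono_set fun z hz => ?_
  by_cases hz1 : z ∈ closedBall (0 : Plane) 1
  · exact Or.inl ⟨hz1, hz⟩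
  · exact Or.inr hz1

theorem integrable_mul_cutoff (_ : IsProfile ψ r) {k : ℝ} (hk : 0 < k) {a : Plane → ℝ}
    (ha : ∀ z, z ≠ 0 → ContinuousAt a z) (hs : HasCompactSupport a) :
    Integrable fun z => a z * cutoff k z := by
  have h1 := contDiff_mul_cutoff hk (a := fun _ => 1) (fun z _ => contDiffAt_const)
  have h2 := zero_notMem_tsupport_mul_cutoff hk (fun _ => 1)
  simp only [one_mul] at h1 h2
  exact integrable_mul_of_zero_notMem_tsupport ha hs h1.continuous h2

theorem integral_lap_mul_cutoff_nonneg (h : IsProfile ψ r) {k : ℝ} (hk : 0 < k) :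
    0 ≤ ∫ z, lap ψ z * cutoff k z := by
  have h1 := h.green hk (a := fun _ => 1) (fun z _ => contDiffAt_const)
  simp only [one_mul] at h1
  rw [← h1]
  refine integral_nonneg_of_ae ?_
  filter_upwards [ae_ne_zero] with z hz
  exact mul_nonneg (h.nonneg z hz) (lap_cutoff_nonneg hk hz)

theorem abs_lap_mul_cutoff_le (h : IsProfile ψ r) {k : ℝ} (hk : 0 < k) (z : Plane) :
    |lap ψ z| * cutoff k z ≤ |lap ψ z| := by
  by_cases hz : ‖z‖ ≤ 1
  · exact mul_le_of_le_one_right (abs_nonneg _) (cutoff_le_one hk hz)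
  · rw [h.lap_eq_zero (by linarith)]
    simp

theorem integrable_lap (h : IsProfile ψ r) : Integrable (lap ψ) := by
  have hm : AEStronglyMeasurable (lap ψ) volume :=
    aestronglyMeasurable_of_continuousAt fun z hz => h.continuousAt_lap hz
  have hi (n : ℕ) : Integrable fun z => lap ψ z * cutoff ((n : ℝ) + 1) z :=
    h.integrable_mul_cutoff (by positivity) (fun z hz => h.continuousAt_lap hz)
      h.hasCompactSupport_lap
  have hin : ∀ n z, (ball 0 r).indicator (fun w => -lap ψ w) z * cutoff ((n : ℕ) + 1 : ℝ) z =
      (ball 0 r).indicator (fun w => -(lap ψ w * cutoff ((n : ℕ) + 1 : ℝ) w)) z := by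
    intro n z
    by_cases hz : z ∈ ball 0 r <;> simp [hz]
  have hball : IntegrableOn (fun z => -lap ψ z) (ball 0 r) := by
    rw [← integrable_indicator_iff measurableSet_ball]
    refine integrable_of_cutoff (σ := fun n => cutoff ((n : ℝ) + 1))
      (B := ∫ z in (ball 0 r)ᶜ, |lap ψ z|) ?_ (hm.neg.indicator measurableSet_ball)
      (fun n z => cutoff_nonneg _ z) ?_ ?_ ?_
    · filter_upwards [ae_ne_zero] with z hz
      by_cases hz' : z ∈ ball 0 r
      · simpa [hz'] using h.superharmonic z hz (by simpa using hz')
      · simp [hz']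
    · filter_upwards [ae_ne_zero] with z hz using tendsto_cutoff hz
    · intro n
      simp only [hin]
      exact (hi n).neg.indicator measurableSet_ball
    · intro n
      simp only [hin]
      rw [integral_indicator measurableSet_ball, integral_neg]
      have h1 := h.integral_lap_mul_cutoff_nonneg (k := (n : ℝ) + 1) (by positivity)
      rw [← integral_add_compl measurableSet_ball (hi n)] at h1
      have h2 : ∫ z in (ball 0 r)ᶜ, lap ψ z * cutoff ((n : ℝ) + 1) z ≤
          ∫ z in (ball 0 r)ᶜ, |lap ψ z| := by
        refine integral_mono (hi n).integrableOn h.integrableOn_lap_compl_ball.abs fun z => ?_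
        refine le_trans ?_ (h.abs_lap_mul_cutoff_le (k := (n : ℝ) + 1) (by positivity) z)
        exact mul_le_mul_of_nonneg_right (le_abs_self _) (cutoff_nonneg _ _)
      linarith
  rw [← integrableOn_univ, ← Set.union_compl_self (ball 0 r)]
  have hball' : IntegrableOn (lap ψ) (ball 0 r) := by simpa using hball.neg
  exact hball'.union h.integrableOn_lap_compl_ball

theorem integrable_div_norm (h : IsProfile ψ r) : Integrable fun z => ψ z / ‖z‖ := by
  have hc : ∀ z, z ≠ 0 → ContinuousAt (fun z => ψ z / ‖z‖) z := fun z hz =>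
    (h.smooth z hz).continuousAt.div continuous_norm.continuousAt (norm_ne_zero_iff.2 hz)
  have hi (n : ℕ) : Integrable fun z => ψ z / ‖z‖ * cutoff ((n : ℝ) + 1) z := by
    refine h.integrable_mul_cutoff (by positivity) hc ?_
    simp only [div_eq_mul_inv]
    exact h.hasCompactSupport.mul_right
  refine integrable_of_cutoff (σ := fun n => cutoff ((n : ℝ) + 1)) (B := ∫ z, |lap ψ z|)
    ?_ (aestronglyMeasurable_of_continuousAt hc) (fun n z => cutoff_nonneg _ z) ?_ hi ?_
  · filter_upwards [ae_ne_zero] with z hz using div_nonneg (h.nonneg z hz) (norm_nonneg z)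
  · filter_upwards [ae_ne_zero] with z hz using tendsto_cutoff hz
  · intro n
    have hk : (0 : ℝ) < n + 1 := by positivity
    have hsm := contDiff_mul_cutoff hk (fun z hz => contDiffAt_norm_two hz)
    have h0 := zero_notMem_tsupport_mul_cutoff hk (fun w => ‖w‖)
    calc ∫ z, ψ z / ‖z‖ * cutoff ((n : ℝ) + 1) z
        ≤ ∫ z, ψ z * lap (fun w => ‖w‖ * cutoff ((n : ℝ) + 1) w) z := by
          refine integral_mono_ae (hi n) ?_ ?_
          · refine integrable_mul_of_zero_notMem_tsupport
              (fun z hz => (h.smooth z hz).continuousAt) h.hasCompactSupport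
              (continuous_iff_continuousAt.2 fun z =>
                _root_.continuousAt_lap hsm.contDiffAt) ?_
            rw [notMem_tsupport_iff_eventuallyEq] at h0 ⊢
            filter_upwards [h0.eventuallyEq_nhds] with w hw
            rw [lap_congr hw]
            simp [lap]
          · filter_upwards [ae_ne_zero] with z hz
            have := mul_le_mul_of_nonneg_left (cutoff_div_norm_le_lap hk hz) (h.nonneg z hz)
            calc _ = ψ z * (cutoff ((n : ℝ) + 1) z / ‖z‖) := by ring
              _ ≤ _ := this
      _ = ∫ z, lap ψ z * (‖z‖ * cutoff ((n : ℝ) + 1) z) :=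
          h.green hk (fun z hz => contDiffAt_norm_two hz)
      _ ≤ ∫ z, |lap ψ z| := by
          refine integral_mono ?_ h.integrable_lap.abs fun z => ?_
          · exact integrable_mul_of_zero_notMem_tsupport (fun z hz => h.continuousAt_lap hz)
              h.hasCompactSupport_lap hsm.continuous h0
          · by_cases hz : ‖z‖ ≤ 1
            · have h1 := abs_mul (lap ψ z) (‖z‖ * cutoff ((n : ℝ) + 1) z)
              rw [abs_of_nonneg (mul_nonneg (norm_nonneg z) (cutoff_nonneg _ z))] at h1
              refine (le_abs_self _).trans ?_
              rw [h1]
              exact mul_le_of_le_one_right (abs_nonneg _)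
                (mul_le_one₀ hz (cutoff_nonneg _ _) (cutoff_le_one hk hz))
            · simp [h.lap_eq_zero (by linarith : 1 / 2 < ‖z‖)]

theorem integrable (h : IsProfile ψ r) : Integrable ψ := by
  refine h.integrable_div_norm.mono'
    (aestronglyMeasurable_of_continuousAt fun z hz => (h.smooth z hz).continuousAt) ?_
  filter_upwards [ae_ne_zero] with z hz
  have hn : 0 < ‖z‖ := norm_pos_iff.2 hz
  rw [Real.norm_of_nonneg (h.nonneg z hz), le_div_iff₀ hn]
  by_cases hz1 : 1 / 2 ≤ ‖z‖
  · simp [h.supp z hz1]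
  · exact mul_le_of_le_one_right (h.nonneg z hz) (by linarith)

/-- A `C²` function vanishing at the origin, with its first derivatives, in the unit disk. -/
theorem exists_bound {ζ : Plane → ℝ} (hζ : ContDiff ℝ 2 ζ) (h0 : ζ 0 = 0) :
    ∃ K, 0 ≤ K ∧ ∀ z, ‖z‖ ≤ 1 → |ζ z| ≤ K * ‖z‖ ∧ (∀ i, |pd i ζ z| ≤ K) ∧ |lap ζ z| ≤ K := by
  have hc : Continuous (fderiv ℝ ζ) := hζ.continuous_fderiv (by norm_num)
  obtain ⟨K1, hK1⟩ := (isCompact_closedBall (0 : Plane) 1).exists_bound_of_continuousOn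
    hc.continuousOn
  have hl : Continuous (lap ζ) := continuous_iff_continuousAt.2 fun z =>
    _root_.continuousAt_lap hζ.contDiffAt
  obtain ⟨K2, hK2⟩ := (isCompact_closedBall (0 : Plane) 1).exists_bound_of_continuousOn
    hl.continuousOn
  refine ⟨max (max K1 K2) 0, le_max_right _ _, fun z hz => ?_⟩
  have hz' : z ∈ closedBall (0 : Plane) 1 := by simpa using hz
  have hKK : K1 ≤ max (max K1 K2) 0 := (le_max_left _ _).trans (le_max_left _ _)
  refine ⟨?_, fun i => ?_, (hK2 z hz').trans ((le_max_right _ _).trans (le_max_left _ _))⟩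
  · have := (convex_closedBall (0 : Plane) 1).norm_image_sub_le_of_norm_fderiv_le (𝕜 := ℝ)
      (fun x _ => (hζ.differentiable (by norm_num)).differentiableAt) hK1
      (mem_closedBall_self zero_le_one) hz'
    rw [h0, sub_zero, sub_zero] at this
    exact this.trans (mul_le_mul_of_nonneg_right hKK (norm_nonneg z))
  · refine ((fderiv ℝ ζ z).le_opNorm _).trans ?_
    simpa using (hK1 z hz').trans hKK

theorem pd_mul_pd_bound {K k t p q : ℝ} (hp : |p| ≤ K) (hq : |q| ≤ 6 / (k * t)) (hK : 0 ≤ K) :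
    |p * q| ≤ 6 * K / (k * t) := by
  rw [abs_mul]
  calc |p| * |q| ≤ K * (6 / (k * t)) := by gcongr
    _ = _ := by ring

/-- The distributional Laplacian of `ψ` differs from the pointwise one by a multiple of the
Dirac mass at the origin. -/
theorem integral_mul_lap_of_zero (h : IsProfile ψ r) {ζ : Plane → ℝ} (hζ : ContDiff ℝ 2 ζ)
    (h0 : ζ 0 = 0) : ∫ z, ψ z * lap ζ z = ∫ z, lap ψ z * ζ z := by
  obtain ⟨K, hK, hb⟩ := exists_bound hζ h0
  have hk (n : ℕ) : (0 : ℝ) < n + 1 := by positivity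
  have hrem (n : ℕ) {z : Plane} (hz : z ≠ 0) (hz1 : ‖z‖ ≤ 1) :
      |lap (fun w => ζ w * cutoff ((n : ℝ) + 1) w) z - cutoff ((n : ℝ) + 1) z * lap ζ z| ≤
        48 * K / ‖z‖ * (1 / ((n : ℝ) + 1)) := by
    have hn : 0 < ‖z‖ := norm_pos_iff.2 hz
    obtain ⟨b1, b2, b3⟩ := hb z hz1
    rw [lap_mul hζ.contDiffAt (contDiffAt_cutoff hz), add_sub_cancel_right]
    have c0 := pd_mul_pd_bound (b2 0) (abs_pd_cutoff_le (hk n) 0 hz hz1) hK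
    have c1 := pd_mul_pd_bound (b2 1) (abs_pd_cutoff_le (hk n) 1 hz hz1) hK
    have c2 : |ζ z * lap (cutoff ((n : ℝ) + 1)) z| ≤ 24 * K / (((n : ℝ) + 1) * ‖z‖) := by
      rw [abs_mul, abs_of_nonneg (lap_cutoff_nonneg (hk n) hz)]
      calc |ζ z| * lap (cutoff ((n : ℝ) + 1)) z
          ≤ (K * ‖z‖) * (24 / (((n : ℝ) + 1) ^ 2 * ‖z‖ ^ 2)) := by
            gcongr
            · exact lap_cutoff_nonneg (hk n) hz
            · exact lap_cutoff_le (hk n) hz hz1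
        _ = 24 * K / (((n : ℝ) + 1) * ‖z‖) * (1 / ((n : ℝ) + 1)) := by field_simp
        _ ≤ _ := by
          refine mul_le_of_le_one_right (by positivity) ?_
          rw [div_le_one (hk n)]
          linarith [(Nat.cast_nonneg n : (0 : ℝ) ≤ n)]
    calc _ ≤ |ζ z * lap (cutoff ((n : ℝ) + 1)) z| +
          2 * (|pd 0 ζ z * pd 0 (cutoff ((n : ℝ) + 1)) z| +
            |pd 1 ζ z * pd 1 (cutoff ((n : ℝ) + 1)) z|) := by
          refine (abs_add_le _ _).trans ?_
          rw [abs_mul 2, abs_two]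
          gcongr
          exact abs_add_le _ _
      _ ≤ 24 * K / (((n : ℝ) + 1) * ‖z‖) + 2 * (6 * K / (((n : ℝ) + 1) * ‖z‖) +
          6 * K / (((n : ℝ) + 1) * ‖z‖)) := by gcongr
      _ = _ := by field_simp; ring
  have hL : Tendsto (fun n : ℕ => ∫ z, ψ z * lap (fun w => ζ w * cutoff ((n : ℝ) + 1) w) z) atTop
      (nhds (∫ z, ψ z * lap ζ z)) := by
    refine tendsto_integral_of_dominated_convergence (fun z => 49 * K * (ψ z / ‖z‖)) ?_
      (h.integrable_div_norm.const_mul _) ?_ ?_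
    · intro n
      exact aestronglyMeasurable_of_continuousAt fun z hz =>
        (h.smooth z hz).continuousAt.mul (_root_.continuousAt_lap
          (contDiff_mul_cutoff (hk n) fun z _ => hζ.contDiffAt).contDiffAt)
    · intro n
      filter_upwards [ae_ne_zero] with z hz
      have hn : 0 < ‖z‖ := norm_pos_iff.2 hz
      by_cases hz1 : ‖z‖ ≤ 1
      · obtain ⟨b1, b2, b3⟩ := hb z hz1
        have c1 := hrem n hz hz1
        have c2 : |cutoff ((n : ℝ) + 1) z * lap ζ z| ≤ K / ‖z‖ := by
          rw [abs_mul, abs_of_nonneg (cutoff_nonneg _ _), le_div_iff₀ hn]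
          calc cutoff ((n : ℝ) + 1) z * |lap ζ z| * ‖z‖ ≤ 1 * K * 1 := by
                gcongr
                exact cutoff_le_one (hk n) hz1
            _ = K := by ring
        have c3 : 48 * K / ‖z‖ * (1 / ((n : ℝ) + 1)) ≤ 48 * K / ‖z‖ := by
          refine mul_le_of_le_one_right (by positivity) ?_
          rw [div_le_one (hk n)]
          linarith [(Nat.cast_nonneg n : (0 : ℝ) ≤ n)]
        have c4 : |lap (fun w => ζ w * cutoff ((n : ℝ) + 1) w) z| ≤ 49 * K / ‖z‖ := by
          have := abs_add_le (lap (fun w => ζ w * cutoff ((n : ℝ) + 1) w) z -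
            cutoff ((n : ℝ) + 1) z * lap ζ z) (cutoff ((n : ℝ) + 1) z * lap ζ z)
          rw [sub_add_cancel] at this
          have e : 49 * K / ‖z‖ = 48 * K / ‖z‖ + K / ‖z‖ := by ring
          linarith
        rw [Real.norm_eq_abs, abs_mul, abs_of_nonneg (h.nonneg z hz)]
        calc _ ≤ ψ z * (49 * K / ‖z‖) := mul_le_mul_of_nonneg_left c4 (h.nonneg z hz)
          _ = _ := by ring
      · simp [h.supp z (by linarith)]
    · filter_upwards [ae_ne_zero] with z hz
      by_cases hz1 : ‖z‖ ≤ 1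
      · refine Tendsto.const_mul _ ?_
        have t1 : Tendsto (fun n : ℕ => 48 * K / ‖z‖ * (1 / ((n : ℝ) + 1))) atTop (nhds 0) := by
          simpa using tendsto_one_div_add_atTop_nhds_zero_nat.const_mul (48 * K / ‖z‖)
        have t2 := squeeze_zero_norm (fun n => (Real.norm_eq_abs _).le.trans
          (hrem n hz hz1)) t1
        have t3 := t2.add ((tendsto_cutoff hz).mul_const (lap ζ z))
        simpa using t3
      · simp [h.supp z (by linarith)]
  have hR : Tendsto (fun n : ℕ => ∫ z, lap ψ z * (ζ z * cutoff ((n : ℝ) + 1) z)) atTop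
      (nhds (∫ z, lap ψ z * ζ z)) := by
    refine tendsto_integral_of_dominated_convergence (fun z => K * |lap ψ z|) ?_
      (h.integrable_lap.abs.const_mul _) ?_ ?_
    · intro n
      exact aestronglyMeasurable_of_continuousAt fun z hz =>
        (h.continuousAt_lap hz).mul
          (contDiff_mul_cutoff (hk n) fun z _ => hζ.contDiffAt).continuous.continuousAt
    · intro n
      refine Eventually.of_forall fun z => ?_
      by_cases hz1 : ‖z‖ ≤ 1
      · rw [Real.norm_eq_abs, abs_mul, abs_mul, abs_of_nonneg (cutoff_nonneg _ _), mul_comm]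
        refine mul_le_mul_of_nonneg_right ?_ (abs_nonneg _)
        calc |ζ z| * cutoff ((n : ℝ) + 1) z ≤ (K * ‖z‖) * 1 := by
              gcongr
              · exact cutoff_nonneg _ _
              · exact (hb z hz1).1
              · exact cutoff_le_one (hk n) hz1
          _ ≤ K := by
              rw [mul_one]
              exact mul_le_of_le_one_right hK hz1
      · simp [h.lap_eq_zero (by linarith : 1 / 2 < ‖z‖)]
    · filter_upwards [ae_ne_zero] with z hz
      refine Tendsto.const_mul _ ?_
      simpa using (tendsto_cutoff hz).const_mul (ζ z)
  refine tendsto_nhds_unique hL (hR.congr fun n => ?_)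
  exact (h.green (hk n) (a := ζ) fun z _ => hζ.contDiffAt).symm

end IsProfile

/-! ### The regularized logarithmic kernel -/

theorem finrank_plane : Module.finrank ℝ Plane = 2 := by simp

theorem pd_comp_const_sub (i : Fin 2) {f : Plane → ℝ} {z x : Plane}
    (h : DifferentiableAt ℝ f (z - x)) : pd i (fun w => f (z - w)) x = -pd i f (z - x) := by
  have h1 : HasFDerivAt (fun w : Plane => z - w) (-ContinuousLinearMap.id ℝ Plane) x :=
    (hasFDerivAt_id x).const_sub z
  have h2 := h.hasFDerivAt.comp x h1
  have h3 : HasFDerivAt (fun w : Plane => f (z - w)) _ x := h2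
  simp [pd, h3.fderiv]

theorem lap_comp_const_sub {f : Plane → ℝ} (hf : ContDiff ℝ 2 f) (z x : Plane) :
    lap (fun w => f (z - w)) x = lap f (z - x) := by
  have h (i : Fin 2) : pd i (pd i (fun w => f (z - w))) x = pd i (pd i f) (z - x) := by
    have e : pd i (fun w => f (z - w)) = fun w => (-pd i f (z - w)) := by
      ext w
      exact pd_comp_const_sub i (hf.differentiable (by norm_num)).differentiableAt
    have hd : DifferentiableAt ℝ (pd i f) (z - x) := differentiableAt_pd i hf.contDiffAt
    have h1 := pd_comp_const_sub i hd
    rw [e]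
    simp only [pd] at h1 ⊢
    rw [fderiv_fun_neg, _root_.neg_apply, h1, neg_neg]
  rw [lap_eq_pd, lap_eq_pd, h, h]

theorem lap_sub_const (f : Plane → ℝ) (a : ℝ) (z : Plane) :
    lap (fun w => f w - a) z = lap f z := by
  simp only [lap, fderiv_sub_const]

/-- A smooth approximation, from above, of `log |x|`. -/
noncomputable def logReg (c : ℝ) (x : Plane) : ℝ := Real.log (‖x‖ ^ 2 + 1 / c ^ 2) / 2

/-- The profile of the Laplacian of `logReg`. -/
noncomputable def bubble (x : Plane) : ℝ := 2 / (1 + ‖x‖ ^ 2) ^ 2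

theorem contDiff_logReg {c : ℝ} (hc : 0 < c) : ContDiff ℝ 2 (logReg c) := by
  refine ContDiff.div_const (ContDiff.log ?_ fun x => by positivity) 2
  exact (contDiff_norm_sq ℝ).add contDiff_const

theorem lap_logReg {c : ℝ} (hc : 0 < c) (x : Plane) :
    lap (logReg c) x = c ^ 2 * bubble (c • x) := by
  have hp : 0 < ‖x‖ ^ 2 + 1 / c ^ 2 := by positivity
  have h1 : ∀ q : ℝ, 0 < q + 1 / c ^ 2 →
      HasDerivAt (fun q => Real.log (q + 1 / c ^ 2) / 2) ((q + 1 / c ^ 2)⁻¹ / 2) q := by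
    intro q hq
    simpa using (((hasDerivAt_id q).add_const (1 / c ^ 2)).log hq.ne').div_const 2
  have h2 : HasDerivAt (fun q => (q + 1 / c ^ 2)⁻¹ / 2) (-1 / (‖x‖ ^ 2 + 1 / c ^ 2) ^ 2 / 2)
      (‖x‖ ^ 2) :=
    (((hasDerivAt_id (‖x‖ ^ 2)).add_const (1 / c ^ 2)).inv hp.ne').div_const 2
  have h3 : ∀ᶠ q in nhds (‖x‖ ^ 2), HasDerivAt (fun q => Real.log (q + 1 / c ^ 2) / 2)
      ((q + 1 / c ^ 2)⁻¹ / 2) q := by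
    have : ContinuousAt (fun q : ℝ => q + 1 / c ^ 2) (‖x‖ ^ 2) := by fun_prop
    filter_upwards [this.eventually (lt_mem_nhds hp)] with q hq using h1 q hq
  have h4 := lap_radial h3 h2
  have h5 : lap (logReg c) x = _ := h4
  rw [h5, bubble, norm_smul, Real.norm_of_nonneg hc.le, mul_pow]
  field_simp
  ring

theorem bubble_pos (x : Plane) : 0 < bubble x := by
  unfold bubble
  positivity

theorem integrable_bubble : Integrable bubble := by
  have h := (integrable_rpow_neg_one_add_norm_sq (E := Plane) (μ := volume) (r := 4)
    (by rw [finrank_plane]; norm_num)).const_mul 2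
  refine h.congr (Eventually.of_forall fun x => ?_)
  have hp : (0 : ℝ) ≤ 1 + ‖x‖ ^ 2 := by positivity
  have : (-4 / 2 : ℝ) = -((2 : ℕ) : ℝ) := by norm_num
  simp only [bubble]
  rw [this, Real.rpow_neg hp, Real.rpow_natCast]
  rfl

theorem integral_bubble_pos : 0 < ∫ x, bubble x := by
  rw [integral_pos_iff_support_of_nonneg (fun x => (bubble_pos x).le) integrable_bubble]
  have : Function.support bubble = Set.univ := by
    ext x
    simp [(bubble_pos x).ne']
  rw [this]
  exact isOpen_univ.measure_pos _ Set.univ_nonempty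

theorem tendsto_sq_mul_bubble :
    Tendsto (fun x : Plane => ‖x‖ ^ 2 * bubble x) (Bornology.cobounded Plane) (nhds 0) := by
  have h1 : Tendsto (fun x : Plane => 2 / (1 + ‖x‖ ^ 2)) (Bornology.cobounded Plane) (nhds 0) := by
    refine Tendsto.div_atTop tendsto_const_nhds ?_
    exact tendsto_atTop_add_const_left _ _
      ((tendsto_pow_atTop two_ne_zero).comp tendsto_norm_cobounded_atTop)
  refine squeeze_zero (fun x => mul_nonneg (by positivity) (bubble_pos x).le) (fun x => ?_) h1
  rw [bubble, mul_div_assoc', div_le_div_iff₀ (by positivity) (by positivity)]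
  nlinarith [sq_nonneg ‖x‖]

/-- The kernels `lap (logReg c)` converge to a multiple of the Dirac mass. -/
theorem tendsto_integral_mul_lap_logReg {g : Plane → ℝ} (hg : Integrable g) {z : Plane}
    (hz : ContinuousAt g z) :
    Tendsto (fun n : ℕ => ∫ w, g w * lap (logReg ((n : ℝ) + 1)) (z - w)) atTop
      (nhds ((∫ x, bubble x) * g z)) := by
  set c := ∫ x, bubble x with hc
  have hc0 : 0 < c := integral_bubble_pos
  have h1 := tendsto_integral_comp_smul_smul_of_integrable' (μ := (volume : Measure Plane))
    (φ := fun x => bubble x / c) (fun x => (div_pos (bubble_pos x) hc0).le)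
    (by rw [integral_div, ← hc, div_self hc0.ne'])
    (by
      rw [finrank_plane]
      simpa [mul_div_assoc] using tendsto_sq_mul_bubble.div_const c) hg hz
  have h2 : Tendsto (fun n : ℕ => (n : ℝ) + 1) atTop atTop :=
    tendsto_atTop_add_const_right _ _ tendsto_natCast_atTop_atTop
  have h3 := (h1.comp h2).const_mul c
  refine h3.congr fun n => ?_
  simp only [Function.comp]
  rw [← integral_const_mul]
  congr 1
  ext w
  rw [lap_logReg (by positivity), finrank_plane, smul_eq_mul]
  field_simp

theorem logReg_ge {c : ℝ} (hc : 0 < c) {x : Plane} (hx : x ≠ 0) :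
    Real.log ‖x‖ ≤ logReg c x := by
  have hn : 0 < ‖x‖ := norm_pos_iff.2 hx
  have h1 : Real.log (‖x‖ ^ 2) ≤ Real.log (‖x‖ ^ 2 + 1 / c ^ 2) :=
    Real.log_le_log (by positivity) (by linarith [show 0 < 1 / c ^ 2 by positivity])
  rw [Real.log_pow] at h1
  push_cast at h1
  unfold logReg
  linarith

theorem logReg_le {c : ℝ} (hc : 1 ≤ c) (x : Plane) : logReg c x ≤ ‖x‖ := by
  have h0 : 0 ≤ ‖x‖ := norm_nonneg x
  have hc1 : 1 / c ^ 2 ≤ 1 := by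
    rw [div_le_one (by positivity)]
    nlinarith
  have hc2 : 0 < 1 / c ^ 2 := by positivity
  have h1 : Real.log (‖x‖ ^ 2 + 1 / c ^ 2) ≤ Real.log ((‖x‖ + 1) ^ 2) :=
    Real.log_le_log (by positivity) (by nlinarith)
  rw [Real.log_pow] at h1
  push_cast at h1
  have h2 := Real.log_le_sub_one_of_pos (show 0 < ‖x‖ + 1 by positivity)
  unfold logReg
  linarith

theorem abs_logReg_le {c : ℝ} (hc : 1 ≤ c) {x : Plane} (hx : x ≠ 0) :
    |logReg c x| ≤ |Real.log ‖x‖| + ‖x‖ := by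
  have h1 := logReg_ge (by linarith : 0 < c) hx
  have h2 := logReg_le hc x
  rw [abs_le]
  constructor
  · linarith [neg_abs_le (Real.log ‖x‖), norm_nonneg x]
  · linarith [abs_nonneg (Real.log ‖x‖)]

theorem tendsto_logReg {x : Plane} (hx : x ≠ 0) :
    Tendsto (fun n : ℕ => logReg ((n : ℝ) + 1) x) atTop (nhds (Real.log ‖x‖)) := by
  have hn : 0 < ‖x‖ := norm_pos_iff.2 hx
  have h1 : Tendsto (fun n : ℕ => ‖x‖ ^ 2 + 1 / ((n : ℝ) + 1) ^ 2) atTop (nhds (‖x‖ ^ 2)) := by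
    have := (tendsto_one_div_add_atTop_nhds_zero_nat (𝕜 := ℝ)).pow 2
    simpa using this.const_add (‖x‖ ^ 2)
  have h2 := ((Real.continuousAt_log (by positivity : ‖x‖ ^ 2 ≠ 0)).tendsto.comp h1).div_const 2
  rw [Real.log_pow] at h2
  simpa [logReg] using h2

theorem abs_log_le_rpow {t : ℝ} (h0 : 0 ≤ t) (h1 : t ≤ 1) :
    |Real.log t| ≤ 2 * t ^ (-(1 / 2) : ℝ) := by
  rcases h0.eq_or_lt with rfl | h0
  · simp
  have := Real.log_le_rpow_div (x := t⁻¹) (by positivity) (ε := 1 / 2) (by norm_num)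
  rw [Real.log_inv, Real.inv_rpow h0.le, ← Real.rpow_neg h0.le] at this
  rw [abs_of_nonpos (Real.log_nonpos h0.le h1)]
  linarith

theorem integrableOn_ball_rpow {α : ℝ} (hα : α < 2) (r : ℝ) :
    IntegrableOn (fun x : Plane => ‖x‖ ^ (-α)) (ball 0 r) := by
  refine integrableOn_ball_of_norm_le_rpow (C := 1) (α := α) (by rw [finrank_plane]; norm_num)
    (by rw [finrank_plane]; exact_mod_cast hα) (Eventually.of_forall fun x => ?_)
    (Measurable.aestronglyMeasurable (by fun_prop))
  rw [one_mul, Real.norm_of_nonneg (by positivity)]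

theorem integrableOn_ball_log {r : ℝ} (hr : r ≤ 1) :
    IntegrableOn (fun x : Plane => |Real.log ‖x‖|) (ball 0 r) := by
  refine ((integrableOn_ball_rpow (α := 1 / 2) (by norm_num) r).const_mul 2).mono'
    (Measurable.aestronglyMeasurable (by fun_prop)) ?_
  refine (ae_restrict_iff' measurableSet_ball).2 (Eventually.of_forall fun x hx => ?_)
  rw [Real.norm_eq_abs, abs_abs]
  have : ‖x‖ < r := by simpa using hx
  exact abs_log_le_rpow (norm_nonneg x) (by linarith)

theorem integrableOn_ball_comp_sub {g : Plane → ℝ} {r : ℝ} (h : IntegrableOn g (ball 0 r))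
    (z : Plane) : IntegrableOn (fun w => g (z - w)) (ball z r) := by
  rw [← integrable_indicator_iff measurableSet_ball] at h ⊢
  refine (h.comp_sub_left z).congr (Eventually.of_forall fun w => ?_)
  have : z - w ∈ ball (0 : Plane) r ↔ w ∈ ball z r := by
    simp [dist_eq_norm, norm_sub_rev]
  by_cases hw : w ∈ ball z r
  · simp [hw, this.2 hw]
  · beta_reduce
    rw [Set.indicator_of_notMem hw, Set.indicator_of_notMem (fun h => hw (this.1 h))]

theorem abs_log_le_of_far {t δ A : ℝ} (hδ : 0 < δ) (h1 : δ ≤ t) (h2 : t ≤ A) :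
    |Real.log t| ≤ |Real.log δ| + A := by
  have ht : 0 < t := hδ.trans_le h1
  have a1 := Real.log_le_log hδ h1
  have a2 := Real.log_le_sub_one_of_pos ht
  rw [abs_le]
  constructor
  · linarith [neg_abs_le (Real.log δ)]
  · linarith [abs_nonneg (Real.log δ)]

/-- The logarithmic potential converges at every point near which the density is bounded. -/
theorem integrable_mul_log {F : Plane → ℝ} (hF : Integrable F)
    (hs : ∀ w, 1 / 2 < ‖w‖ → F w = 0) {z : Plane} {δ B : ℝ} (hδ : 0 < δ)
    (hB : ∀ w ∈ ball z δ, |F w| ≤ B) : Integrable fun w => F w * Real.log ‖z - w‖ := by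
  wlog hδ1 : δ ≤ 1 generalizing δ
  · exact this zero_lt_one (fun w hw => hB w (ball_subset_ball (not_le.1 hδ1).le hw)) le_rfl
  have hm : AEStronglyMeasurable (fun w => F w * Real.log ‖z - w‖) volume :=
    hF.aestronglyMeasurable.mul (Measurable.aestronglyMeasurable (by fun_prop))
  have h1 : IntegrableOn (fun w => F w * Real.log ‖z - w‖) (ball z δ) := by
    refine ((integrableOn_ball_comp_sub (integrableOn_ball_log hδ1) z).const_mul B).mono'
      hm.restrict ?_
    refine (ae_restrict_iff' measurableSet_ball).2 (Eventually.of_forall fun w hw => ?_)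
    rw [Real.norm_eq_abs, abs_mul]
    exact mul_le_mul_of_nonneg_right (hB w hw) (abs_nonneg _)
  have h2 : IntegrableOn (fun w => F w * Real.log ‖z - w‖) (ball z δ)ᶜ := by
    refine (hF.abs.mul_const (|Real.log δ| + (‖z‖ + 1))).integrableOn.mono' hm.restrict ?_
    refine (ae_restrict_iff' measurableSet_ball.compl).2 (Eventually.of_forall fun w hw => ?_)
    rw [Real.norm_eq_abs, abs_mul]
    by_cases hw1 : 1 / 2 < ‖w‖
    · simp [hs w hw1]
    · refine mul_le_mul_of_nonneg_left (abs_log_le_of_far hδ ?_ ?_) (abs_nonneg _)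
      · simpa [dist_eq_norm, norm_sub_rev] using hw
      · linarith [norm_sub_le z w]
  rw [← integrableOn_univ, ← Set.union_compl_self (ball z δ)]
  exact h1.union h2

/-- The regularized potentials converge. -/
theorem tendsto_integral_mul_logReg {F : Plane → ℝ} (hF : Integrable F)
    (hs : ∀ w, 1 / 2 < ‖w‖ → F w = 0) {z : Plane}
    (hi : Integrable fun w => F w * Real.log ‖z - w‖) :
    Tendsto (fun n : ℕ => ∫ w, F w * logReg ((n : ℝ) + 1) (z - w)) atTop
      (nhds (∫ w, F w * Real.log ‖z - w‖)) := by
  have hne : ∀ᵐ w : Plane, z - w ≠ 0 := by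
    have : ∀ᵐ w : Plane, w ≠ z := by simp [ae_iff, measure_singleton]
    filter_upwards [this] with w hw using sub_ne_zero.2 hw.symm
  refine tendsto_integral_of_dominated_convergence
    (fun w => |F w * Real.log ‖z - w‖| + |F w| * (‖z‖ + 1)) (fun n => ?_)
    (hi.abs.add (hF.abs.mul_const _)) (fun n => ?_) ?_
  · refine hF.aestronglyMeasurable.mul (Continuous.aestronglyMeasurable ?_)
    exact (contDiff_logReg (by positivity)).continuous.comp (by fun_prop)
  · filter_upwards [hne] with w hw
    rw [Real.norm_eq_abs, abs_mul, abs_mul, ← mul_add]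
    by_cases hw1 : 1 / 2 < ‖w‖
    · simp [hs w hw1]
    · refine mul_le_mul_of_nonneg_left ?_ (abs_nonneg _)
      have := abs_logReg_le (c := (n : ℝ) + 1) (by simp) hw
      linarith [norm_sub_le z w]
  · filter_upwards [hne] with w hw using (tendsto_logReg hw).const_mul _

namespace IsProfile

variable {ψ : Plane → ℝ} {r : ℝ}

theorem exists_bound_near (h : IsProfile ψ r) {z : Plane} (hz : z ≠ 0) :
    ∃ δ B, 0 < δ ∧ ∀ w ∈ ball z δ, |lap ψ w| ≤ B := by
  have h1 := (h.continuousAt_lap hz).abs.eventually (gt_mem_nhds (lt_add_one |lap ψ z|))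
  obtain ⟨δ, hδ, hb⟩ := Metric.eventually_nhds_iff_ball.1 h1
  exact ⟨δ, _, hδ, fun w hw => (hb w hw).le⟩

theorem integrable_lap_mul_log (h : IsProfile ψ r) {z : Plane} (hz : z ≠ 0) :
    Integrable fun w => lap ψ w * Real.log ‖z - w‖ := by
  obtain ⟨δ, B, hδ, hb⟩ := h.exists_bound_near hz
  exact integrable_mul_log h.integrable_lap (fun w hw => h.lap_eq_zero hw) hδ hb

theorem representation (h : IsProfile ψ r) {z : Plane} (hz : z ≠ 0) :
    (∫ x, bubble x) * ψ z =
      (∫ w, lap ψ w * Real.log ‖z - w‖) - (∫ w, lap ψ w) * Real.log ‖z‖ := by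
  have h1 := tendsto_integral_mul_lap_logReg h.integrable (h.smooth z hz).continuousAt
  have h2 := tendsto_integral_mul_logReg h.integrable_lap (fun w hw => h.lap_eq_zero hw)
    (h.integrable_lap_mul_log hz)
  have h3 := (tendsto_logReg hz).const_mul (∫ w, lap ψ w)
  refine tendsto_nhds_unique h1 ((h2.sub h3).congr fun n => ?_)
  have hc : (0 : ℝ) < n + 1 := by positivity
  have hsm : ContDiff ℝ 2 fun w => logReg ((n : ℝ) + 1) (z - w) :=
    (contDiff_logReg hc).comp (contDiff_const.sub contDiff_id)
  have h4 := h.integral_mul_lap_of_zero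
    (ζ := fun w => logReg ((n : ℝ) + 1) (z - w) - logReg ((n : ℝ) + 1) z)
    (hsm.sub contDiff_const) (by simp)
  simp only [lap_sub_const, lap_comp_const_sub (contDiff_logReg hc)] at h4
  rw [h4, ← integral_mul_const, ← integral_sub]
  · congr 1
    ext w
    ring
  · have hm : AEStronglyMeasurable (fun w => lap ψ w * logReg ((n : ℝ) + 1) (z - w)) volume :=
      h.integrable_lap.aestronglyMeasurable.mul hsm.continuous.aestronglyMeasurable
    obtain ⟨K, hK⟩ := (isCompact_closedBall (0 : Plane) 1).exists_bound_of_continuousOn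
      hsm.continuous.continuousOn
    refine (h.integrable_lap.abs.mul_const K).mono' hm (Eventually.of_forall fun w => ?_)
    rw [Real.norm_eq_abs, abs_mul]
    by_cases hw : 1 / 2 < ‖w‖
    · simp [h.lap_eq_zero hw]
    · refine mul_le_mul_of_nonneg_left (hK w ?_) (abs_nonneg _)
      simp only [mem_closedBall, dist_zero_right]
      linarith
  · exact h.integrable_lap.mul_const _

end IsProfile

/-! ### Growth at the singularity -/

theorem integral_ball_log_le {ρ : ℝ} (hρ : 0 < ρ) (h1 : ρ ≤ 1) :
    ∫ x in ball (0 : Plane) ρ, |Real.log ‖x‖| ≤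
      2 * ρ * ∫ x in ball (0 : Plane) 1, ‖x‖ ^ (-(3 / 2) : ℝ) := by
  have hi := integrableOn_ball_rpow (α := 3 / 2) (by norm_num)
  calc ∫ x in ball (0 : Plane) ρ, |Real.log ‖x‖|
      ≤ ∫ x in ball (0 : Plane) ρ, 2 * ρ * ‖x‖ ^ (-(3 / 2) : ℝ) := by
        refine setIntegral_mono_on (integrableOn_ball_log h1) ((hi ρ).const_mul _)
          measurableSet_ball fun x hx => ?_
        have hx' : ‖x‖ < ρ := by simpa using hx
        refine (abs_log_le_rpow (norm_nonneg x) (by linarith)).trans ?_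
        rcases (norm_nonneg x).eq_or_lt with h0 | h0
        · rw [← h0, Real.zero_rpow (by norm_num), Real.zero_rpow (by norm_num)]
          simp
        · have e : ‖x‖ ^ (-(1 / 2) : ℝ) = ‖x‖ * ‖x‖ ^ (-(3 / 2) : ℝ) := by
            nth_rewrite 2 [← Real.rpow_one ‖x‖]
            rw [← Real.rpow_add h0]
            norm_num
          rw [e, mul_assoc]
          gcongr
    _ = 2 * ρ * ∫ x in ball (0 : Plane) ρ, ‖x‖ ^ (-(3 / 2) : ℝ) := integral_const_mul _ _
    _ ≤ _ := by
        refine mul_le_mul_of_nonneg_left ?_ (by positivity)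
        exact setIntegral_mono_set (hi 1) (Eventually.of_forall fun x => by positivity)
          (ball_subset_ball h1).eventuallyLE

theorem integral_indicator_ball_comp_sub (g : Plane → ℝ) (z : Plane) (ρ : ℝ) :
    ∫ w, (ball z ρ).indicator (fun w => g (z - w)) w = ∫ x in ball (0 : Plane) ρ, g x := by
  rw [← integral_indicator measurableSet_ball,
    ← integral_sub_left_eq_self ((ball 0 ρ).indicator g) volume z]
  congr 1
  ext w
  have : z - w ∈ ball (0 : Plane) ρ ↔ w ∈ ball z ρ := by
    simp [dist_eq_norm, norm_sub_rev]
  by_cases hw : w ∈ ball z ρ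
  · simp [hw, this.2 hw]
  · rw [Set.indicator_of_notMem hw, Set.indicator_of_notMem (fun h => hw (this.1 h))]

theorem exists_ball_integral_le {F : Plane → ℝ} (hF : Integrable F) {μ : ℝ} (hμ : 0 < μ)
    {r : ℝ} (hr : 0 < r) : ∃ δ, 0 < δ ∧ δ ≤ r ∧ ∫ w in ball (0 : Plane) δ, F w ≤ μ := by
  have h1 := tendsto_setIntegral_of_antitone (μ := (volume : Measure Plane)) (f := F)
    (s := fun n : ℕ => ball (0 : Plane) (1 / ((n : ℝ) + 1))) (fun _ => measurableSet_ball)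
    (fun m n hmn => ball_subset_ball (Nat.one_div_le_one_div hmn)) ⟨0, hF.integrableOn⟩
  have h2 : ⋂ n : ℕ, ball (0 : Plane) (1 / ((n : ℝ) + 1)) = {0} := by
    ext x
    simp only [Set.mem_iInter, mem_ball, dist_zero_right, Set.mem_singleton_iff]
    refine ⟨fun h => ?_, fun h n => ?_⟩
    · by_contra hx
      obtain ⟨n, hn⟩ := exists_nat_one_div_lt (norm_pos_iff.2 hx)
      exact lt_asymm hn (h n)
    · rw [h, norm_zero]
      positivity
  rw [h2, Measure.restrict_singleton, measure_singleton, zero_smul, integral_zero_measure] at h1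
  obtain ⟨n, hn1, hn2⟩ := ((h1.eventually (gt_mem_nhds hμ)).and
    ((tendsto_one_div_add_atTop_nhds_zero_nat (𝕜 := ℝ)).eventually (gt_mem_nhds hr))).exists
  exact ⟨_, by positivity, hn2.le, hn1.le⟩

namespace IsProfile

variable {ψ : Plane → ℝ} {r : ℝ}

/-- Away from a fixed disk, the potential is bounded near the origin. -/
theorem exists_bound_far (h : IsProfile ψ r) {δ : ℝ} (hδ : 0 < δ) :
    ∃ K, 0 ≤ K ∧ ∀ z, z ≠ 0 → ‖z‖ < δ / 2 →
      |(∫ x, bubble x) * ψ z - (∫ w in ball 0 δ, lap ψ w * Real.log ‖z - w‖) +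
        (∫ w, lap ψ w) * Real.log ‖z‖| ≤ K := by
  refine ⟨∫ w, |lap ψ w| * (|Real.log (δ / 2)| + 1),
    integral_nonneg fun w => by positivity, fun z hz hzδ => ?_⟩
  have hi := h.integrable_lap_mul_log hz
  rw [h.representation hz, ← integral_add_compl measurableSet_ball hi]
  have hi2 : Integrable fun w => |lap ψ w| * (|Real.log (δ / 2)| + 1) :=
    h.integrable_lap.abs.mul_const _
  calc _ = |∫ w in (ball 0 δ)ᶜ, lap ψ w * Real.log ‖z - w‖| := by
        congr 1
        ring
    _ ≤ ∫ w in (ball 0 δ)ᶜ, |lap ψ w| * (|Real.log (δ / 2)| + 1) := by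
        rw [← Real.norm_eq_abs]
        refine norm_integral_le_of_norm_le hi2.integrableOn ?_
        refine (ae_restrict_iff' measurableSet_ball.compl).2 (Eventually.of_forall fun w hw => ?_)
        rw [Real.norm_eq_abs, abs_mul]
        by_cases hw1 : 1 / 2 < ‖w‖
        · simp [h.lap_eq_zero hw1]
        · have hw2 : δ ≤ ‖w‖ := by simpa using hw
          refine mul_le_mul_of_nonneg_left (abs_log_le_of_far (half_pos hδ) ?_ ?_) (abs_nonneg _)
          · linarith [norm_sub_norm_le w z, norm_sub_rev z w]
          · linarith [norm_sub_le z w]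
    _ ≤ _ := setIntegral_le_integral hi2 (Eventually.of_forall fun w => by positivity)

theorem near_nonneg (h : IsProfile ψ r) {δ : ℝ} (hδr : δ ≤ r) (hδ1 : δ ≤ 1 / 2) {z : Plane}
    (hzδ : ‖z‖ < 1 / 2) : 0 ≤ ∫ w in ball 0 δ, lap ψ w * Real.log ‖z - w‖ := by
  refine setIntegral_nonneg_of_ae_restrict ?_
  refine (ae_restrict_iff' measurableSet_ball).2 ?_
  filter_upwards [ae_ne_zero] with w hw hwδ
  have hwδ' : ‖w‖ < δ := by simpa using hwδ
  exact mul_nonneg_of_nonpos_of_nonpos (h.superharmonic w hw (by linarith))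
    (Real.log_nonpos (norm_nonneg _) (by linarith [norm_sub_le z w]))

theorem near_le (h : IsProfile ψ r) {δ ρ D μ : ℝ} (hδr : δ ≤ r) (hδ1 : δ ≤ 1 / 2) {z : Plane}
    (hz : z ≠ 0) (hzδ : ‖z‖ < 1 / 2) (hρ : 0 < ρ) (hρ1 : ρ ≤ 1) (hD0 : 0 ≤ D)
    (hD : ∀ w ∈ ball z ρ, w ≠ 0 → -lap ψ w ≤ D) (hμ : ∫ w in ball 0 δ, |lap ψ w| ≤ μ) :
    ∫ w in ball 0 δ, lap ψ w * Real.log ‖z - w‖ ≤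
      D * (2 * ρ * ∫ x in ball (0 : Plane) 1, ‖x‖ ^ (-(3 / 2) : ℝ)) + μ * -Real.log ρ := by
  have hlρ : 0 ≤ -Real.log ρ := by linarith [Real.log_nonpos hρ.le hρ1]
  set I : Plane → ℝ := (ball z ρ).indicator fun w => |Real.log ‖z - w‖| with hI
  have hIi : Integrable I := (integrable_indicator_iff measurableSet_ball).2
    (integrableOn_ball_comp_sub (integrableOn_ball_log hρ1) z)
  have hI0 : ∀ w, 0 ≤ I w := fun w => Set.indicator_nonneg (fun _ _ => abs_nonneg _) w
  have hII : ∫ w, I w ≤ 2 * ρ * ∫ x in ball (0 : Plane) 1, ‖x‖ ^ (-(3 / 2) : ℝ) := by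
    rw [hI, integral_indicator_ball_comp_sub (fun x => |Real.log ‖x‖|)]
    exact integral_ball_log_le hρ hρ1
  calc ∫ w in ball 0 δ, lap ψ w * Real.log ‖z - w‖
      ≤ ∫ w in ball 0 δ, (D * I w + |lap ψ w| * -Real.log ρ) := by
        refine setIntegral_mono_on_ae (h.integrable_lap_mul_log hz).integrableOn
          ((hIi.const_mul D).add (h.integrable_lap.abs.mul_const _)).integrableOn
          measurableSet_ball ?_
        filter_upwards [ae_ne_zero] with w hw hwδ
        have hwδ' : ‖w‖ < δ := by simpa using hwδ
        have hs := h.superharmonic w hw (by linarith)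
        have hl := Real.log_nonpos (norm_nonneg (z - w)) (by linarith [norm_sub_le z w])
        by_cases hwρ : w ∈ ball z ρ
        · have e : I w = -Real.log ‖z - w‖ := by simp [hI, hwρ, abs_of_nonpos hl]
          have := mul_le_mul_of_nonneg_right (hD w hwρ hw) (neg_nonneg.2 hl)
          have h3 := mul_nonneg (abs_nonneg (lap ψ w)) hlρ
          rw [e]
          linarith
        · have hge : ρ ≤ ‖z - w‖ := by simpa [dist_eq_norm, norm_sub_rev] using hwρ
          have h4 := Real.log_le_log hρ hge
          have h5 := mul_le_mul_of_nonneg_left (neg_le_neg h4) (neg_nonneg.2 hs)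
          have h6 := mul_nonneg hD0 (hI0 w)
          rw [abs_of_nonpos hs]
          linarith
    _ = D * (∫ w in ball 0 δ, I w) + (∫ w in ball 0 δ, |lap ψ w|) * -Real.log ρ := by
        rw [integral_add (hIi.const_mul D).integrableOn
          (h.integrable_lap.abs.mul_const _).integrableOn, integral_const_mul, integral_mul_const]
    _ ≤ _ := by
        gcongr
        exact (setIntegral_le_integral hIi (Eventually.of_forall hI0)).trans hII

/-- A weighted maximum of `ψ` on a disk avoiding the origin. -/
theorem exists_weighted_max (h : IsProfile ψ r) {κ s : ℝ} (hκ : 0 < κ) (hs : 0 < s) {z₀ : Plane}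
    (hz₀ : s < ‖z₀‖) :
    ∃ z₁ d, 0 < d ∧ d = s - ‖z₁ - z₀‖ ∧ ψ z₀ + κ * Real.log s ≤ ψ z₁ + κ * Real.log d ∧
      ∀ w ∈ ball z₁ (d / 2), ψ w ≤ ψ z₁ + κ * Real.log 2 := by
  have hc : ContinuousOn (fun w => (s - ‖w - z₀‖) * Real.exp (ψ w / κ)) (closedBall z₀ s) := by
    intro w hw
    have hw0 : w ≠ 0 := by
      rintro rfl
      simp at hw
      linarith
    have := (h.smooth w hw0).continuousAt
    exact ContinuousAt.continuousWithinAt (by fun_prop)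
  obtain ⟨z₁, hz₁, hmax⟩ := (isCompact_closedBall z₀ s).exists_isMaxOn
    ⟨z₀, mem_closedBall_self hs.le⟩ hc
  have hcomp : ∀ w, ∀ t : ℝ, 0 < t → t ≤ s - ‖w - z₀‖ → 0 < s - ‖z₁ - z₀‖ ∧
      ψ w + κ * Real.log t ≤ ψ z₁ + κ * Real.log (s - ‖z₁ - z₀‖) := by
    intro w t ht hts
    have h1 : (s - ‖w - z₀‖) * Real.exp (ψ w / κ) ≤
        (s - ‖z₁ - z₀‖) * Real.exp (ψ z₁ / κ) := hmax (by
      rw [mem_closedBall, dist_eq_norm]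
      linarith)
    have h2 : t * Real.exp (ψ w / κ) ≤ (s - ‖z₁ - z₀‖) * Real.exp (ψ z₁ / κ) :=
      (mul_le_mul_of_nonneg_right hts (Real.exp_pos _).le).trans h1
    have h3 : 0 < s - ‖z₁ - z₀‖ :=
      pos_of_mul_pos_left ((by positivity : 0 < t * Real.exp (ψ w / κ)).trans_le h2)
        (Real.exp_pos _).le
    refine ⟨h3, ?_⟩
    have h4 := Real.log_le_log (by positivity) h2
    rw [Real.log_mul ht.ne' (Real.exp_pos _).ne', Real.log_mul h3.ne' (Real.exp_pos _).ne',
      Real.log_exp, Real.log_exp] at h4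
    have h5 := mul_le_mul_of_nonneg_left h4 hκ.le
    have e (a : ℝ) : κ * (a / κ) = a := by field_simp
    rw [mul_add, mul_add, e, e] at h5
    linarith
  obtain ⟨hd, h0⟩ := hcomp z₀ s hs (by simp)
  refine ⟨z₁, _, hd, rfl, h0, fun w hw => ?_⟩
  have hw' : ‖w - z₁‖ < (s - ‖z₁ - z₀‖) / 2 := by simpa [dist_eq_norm] using hw
  have := (hcomp w ((s - ‖z₁ - z₀‖) / 2) (half_pos hd) (by
    linarith [norm_add_le (w - z₁) (z₁ - z₀), congrArg norm (sub_add_sub_cancel w z₁ z₀)])).2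
  rw [Real.log_div hd.ne' two_ne_zero] at this
  linarith

end IsProfile

theorem abs_log_sub_log_le {s t : ℝ} (hs : 0 < s) (h1 : s / 2 ≤ t) (h2 : t ≤ 2 * s) :
    |Real.log t - Real.log s| ≤ Real.log 2 := by
  have a1 := Real.log_le_log (half_pos hs) h1
  have a2 := Real.log_le_log ((half_pos hs).trans_le h1) h2
  rw [Real.log_div hs.ne' two_ne_zero] at a1
  rw [Real.log_mul two_ne_zero hs.ne'] at a2
  rw [abs_le]
  constructor <;> linarith

theorem exists_radius {d M : ℝ} (hd : 0 < d) (hd1 : d / 2 ≤ 1) (hM : 0 ≤ M) :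
    ∃ ρ, 0 < ρ ∧ ρ ≤ d / 2 ∧ Real.exp (2 * M) * ρ ≤ 1 ∧
      -Real.log ρ ≤ Real.log 2 - Real.log d + 2 * M := by
  refine ⟨min (d / 2) (Real.exp (-(2 * M))), lt_min (half_pos hd) (Real.exp_pos _),
    min_le_left _ _, ?_, ?_⟩
  · calc Real.exp (2 * M) * min (d / 2) (Real.exp (-(2 * M)))
        ≤ Real.exp (2 * M) * Real.exp (-(2 * M)) := by
          gcongr
          exact min_le_right _ _
      _ = 1 := by rw [← Real.exp_add, add_neg_cancel, Real.exp_zero]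
  · have a1 := Real.log_nonpos (half_pos hd).le hd1
    rw [Real.log_div hd.ne' two_ne_zero] at a1
    rcases min_choice (d / 2) (Real.exp (-(2 * M))) with e | e
    · rw [e, Real.log_div hd.ne' two_ne_zero]
      linarith
    · rw [e, Real.log_exp]
      linarith

theorem growth_arith {c K A m ν η M ψz l₂ lz l₁ ld lρ : ℝ} (hc : 0 < c) (hK : 0 ≤ K) (hA : 0 ≤ A)
    (hν0 : 0 < ν) (hν4 : ν ≤ 1 / 4) (hl2 : 0 ≤ l₂) (hl : 0 ≤ -lz)
    (hmν : m + ν ≤ (m + η) * (1 - 2 * ν)) (hlρ : -lρ ≤ l₂ - ld + 2 * M)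
    (hlog : |l₁ - lz| ≤ l₂)
    (hmax : ψz + ν / (1 - 2 * ν) * (lz - l₂) ≤ M + ν / (1 - 2 * ν) * ld)
    (hest : c * M ≤ K + A + ν * c * -lρ - m * c * l₁) :
    ψz ≤ (m + η) * -lz + 2 * (K / c + A / c + |m| * l₂ + 2 * ν * l₂) := by
  have hκ : (1 - 2 * ν) * (ν / (1 - 2 * ν)) = ν := mul_div_cancel₀ _ (by linarith)
  have hK20 : 0 ≤ K / c + A / c + |m| * l₂ + 2 * ν * l₂ := by positivity
  have hK2 : c * (K / c + A / c + |m| * l₂ + 2 * ν * l₂) =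
      K + A + c * (|m| * l₂) + 2 * (c * (ν * l₂)) := by
    field_simp
  set K2 := K / c + A / c + |m| * l₂ + 2 * ν * l₂
  have b2 := mul_le_mul_of_nonneg_left hlρ (mul_pos hν0 hc).le
  have b3 : -(m * l₁) ≤ m * -lz + |m| * l₂ := by
    have h1 := neg_abs_le (m * (l₁ - lz))
    rw [abs_mul] at h1
    have h2 := mul_le_mul_of_nonneg_left hlog (abs_nonneg m)
    linarith
  have b5 := mul_le_mul_of_nonneg_left b3 hc.le
  have b4 : c * ((1 - 2 * ν) * M + ν * ld) ≤ c * (K2 - ν * l₂ + m * -lz) := by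
    linarith
  have b6 := le_of_mul_le_mul_left b4 hc
  have b7 := mul_le_mul_of_nonneg_left hmax (by linarith : 0 ≤ 1 - 2 * ν)
  rw [mul_add, mul_add, ← mul_assoc, hκ, ← mul_assoc, hκ] at b7
  have b9 := mul_le_mul_of_nonneg_right hmν hl
  by_contra! hcon
  have b10 : (1 - 2 * ν) * (2 * K2) < (1 - 2 * ν) * (ψz - (m + η) * -lz) :=
    mul_lt_mul_of_pos_left (by linarith) (by linarith)
  have b11 : 1 / 2 * (2 * K2) ≤ (1 - 2 * ν) * (2 * K2) :=
    mul_le_mul_of_nonneg_right (by linarith) (by linarith)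
  linarith

namespace IsProfile

variable {ψ : Plane → ℝ} {r : ℝ}

/-- The coefficient of the logarithmic singularity of `ψ` at the origin. -/
noncomputable def logCoeff (ψ : Plane → ℝ) : ℝ := (∫ w, lap ψ w) / ∫ x, bubble x

theorem lower_growth (h : IsProfile ψ r) :
    ∃ δ K, 0 < δ ∧ ∀ z, z ≠ 0 → ‖z‖ < δ → logCoeff ψ * -Real.log ‖z‖ - K ≤ ψ z := by
  have hδ : 0 < min r (1 / 2) := lt_min h.pos (by norm_num)
  have hδ2 : min r (1 / 2) ≤ 1 / 2 := min_le_right _ _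
  obtain ⟨K, -, hK⟩ := h.exists_bound_far hδ
  have hc := integral_bubble_pos
  refine ⟨min r (1 / 2) / 2, K / ∫ x, bubble x, half_pos hδ, fun z hz hzδ => ?_⟩
  have h1 := (abs_le.1 (hK z hz hzδ)).1
  have h2 := h.near_nonneg (min_le_left _ _) hδ2 (z := z) (by linarith)
  rw [logCoeff, div_mul_eq_mul_div, ← sub_div, div_le_iff₀ hc]
  linarith

theorem upper_growth (h : IsProfile ψ r) {C η : ℝ} (hC : 0 ≤ C) (hη : 0 < η)
    (hexp : ∀ z, z ≠ 0 → ‖z‖ < r → -lap ψ z ≤ C * Real.exp (2 * ψ z)) :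
    ∃ δ K, 0 < δ ∧ ∀ z, z ≠ 0 → ‖z‖ < δ → ψ z ≤ (logCoeff ψ + η) * -Real.log ‖z‖ + K := by
  have hc := integral_bubble_pos
  set c := ∫ x, bubble x with hcdef
  set m := logCoeff ψ with hm
  have hmc : ∫ w, lap ψ w = m * c := by rw [hm, logCoeff, div_mul_cancel₀ _ hc.ne']
  set ν := η / (4 + 2 * |m| + 4 * η) with hν
  have hden : 0 < 4 + 2 * |m| + 4 * η := by positivity
  have hν0 : 0 < ν := by positivity
  have hνe : ν * (4 + 2 * |m| + 4 * η) = η := div_mul_cancel₀ _ hden.ne'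
  have hν4 : ν ≤ 1 / 4 := by
    rw [hν, div_le_iff₀ hden]
    linarith [abs_nonneg m]
  have hmν : m + ν ≤ (m + η) * (1 - 2 * ν) := by
    have := mul_le_mul_of_nonneg_left (le_abs_self m) hν0.le
    have := mul_pos hν0 hη
    linarith
  have hr2 : 0 < min r (1 / 2) := lt_min h.pos (by norm_num)
  obtain ⟨δ, hδ, hδr, hδμ⟩ := exists_ball_integral_le h.integrable_lap.abs
    (mul_pos hν0 hc) hr2
  have hδr' : δ ≤ r := hδr.trans (min_le_left _ _)
  have hδ2 : δ ≤ 1 / 2 := hδr.trans (min_le_right _ _)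
  obtain ⟨K, hK0, hK⟩ := h.exists_bound_far hδ
  set L := ∫ x in ball (0 : Plane) 1, ‖x‖ ^ (-(3 / 2) : ℝ) with hL
  have hL0 : 0 ≤ L := integral_nonneg fun x => by positivity
  have hl2 : 0 < Real.log 2 := Real.log_pos one_lt_two
  clear_value c m ν L
  refine ⟨δ / 3, 2 * (K / c + 8 * C * L / c + |m| * Real.log 2 + 2 * ν * Real.log 2),
    by positivity, fun z hz hzδ => ?_⟩
  have hzp : 0 < ‖z‖ := norm_pos_iff.2 hz
  obtain ⟨z₁, d, hd, hds, hmax, hnear⟩ := h.exists_weighted_max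
    (κ := ν / (1 - 2 * ν)) (s := ‖z‖ / 2) (div_pos hν0 (by linarith)) (half_pos hzp)
    (half_lt_self hzp)
  have hz1a : ‖z‖ / 2 ≤ ‖z₁‖ := by linarith [norm_sub_norm_le z z₁, norm_sub_rev z z₁]
  have hz1b : ‖z₁‖ ≤ 3 / 2 * ‖z‖ := by linarith [norm_sub_norm_le z₁ z]
  have hz1p : 0 < ‖z₁‖ := by linarith
  have hz1 : z₁ ≠ 0 := norm_pos_iff.1 hz1p
  have hM : 0 ≤ ψ z₁ := h.nonneg z₁ hz1
  have hlog := abs_log_sub_log_le hzp hz1a (by linarith)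
  have hd1 : d / 2 ≤ 1 := by linarith [norm_nonneg (z₁ - z)]
  obtain ⟨ρ, hρ0, hρd, hρM, hlρ⟩ := exists_radius hd hd1 hM
  have hκ1 : ν / (1 - 2 * ν) ≤ 1 := by
    rw [div_le_one (by linarith)]
    linarith
  have hN := h.near_le hδr' hδ2 hz1 (by linarith) hρ0 (by linarith)
    (D := 4 * C * Real.exp (2 * ψ z₁)) (by positivity) (fun w hw hw0 => ?_) hδμ
  · have hfar := (abs_le.1 (hK z₁ hz1 (by linarith))).2
    rw [hmc, ← hcdef] at hfar
    rw [← hL] at hN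
    have b1 : 4 * C * Real.exp (2 * ψ z₁) * (2 * ρ * L) ≤ 8 * C * L := by
      calc _ = 8 * C * L * (Real.exp (2 * ψ z₁) * ρ) := by ring
        _ ≤ 8 * C * L := mul_le_of_le_one_right (by positivity) hρM
    have hl : 0 ≤ -Real.log ‖z‖ :=
      neg_nonneg.2 (Real.log_nonpos hzp.le (by linarith))
    rw [Real.log_div hzp.ne' two_ne_zero] at hmax
    have hest : c * ψ z₁ ≤ K + 8 * C * L + ν * c * -Real.log ρ - m * c * Real.log ‖z₁‖ := by
      linarith
    exact growth_arith hc hK0 (by positivity) hν0 hν4 hl2.le hl hmν hlρ hlog hmax hest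
  · have hw' : ‖w - z₁‖ < ρ := by simpa [dist_eq_norm] using hw
    have hwr : ‖w‖ < r := by
      linarith [norm_sub_norm_le w z₁, norm_nonneg (z₁ - z)]
    refine (hexp w hw0 hwr).trans ?_
    have h2 : (4 : ℝ) = Real.exp (2 * Real.log 2) := by
      rw [two_mul, Real.exp_add, Real.exp_log two_pos]
      norm_num
    have h3 : ψ w ≤ ψ z₁ + Real.log 2 := by
      have := hnear w (ball_subset_ball hρd hw)
      have := mul_le_mul_of_nonneg_right hκ1 hl2.le
      linarith
    calc C * Real.exp (2 * ψ w) ≤ C * Real.exp (2 * Real.log 2 + 2 * ψ z₁) := by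
          gcongr
          linarith
      _ = 4 * C * Real.exp (2 * ψ z₁) := by
          rw [Real.exp_add, ← h2]
          ring

theorem tendsto_neg_log_norm :
    Tendsto (fun z : Plane => -Real.log ‖z‖) (nhdsWithin 0 {0}ᶜ) atTop := by
  exact tendsto_neg_atBot_atTop.comp
    (Real.tendsto_log_nhdsGT_zero.comp tendsto_norm_nhdsNE_zero)

theorem tendsto_div_log (h : IsProfile ψ r) {C : ℝ} (hC : 0 ≤ C)
    (hexp : ∀ z, z ≠ 0 → ‖z‖ < r → -lap ψ z ≤ C * Real.exp (2 * ψ z)) :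
    Tendsto (fun z => ψ z / -Real.log ‖z‖) (nhdsWithin 0 {0}ᶜ) (nhds (logCoeff ψ)) := by
  have hlog := tendsto_neg_log_norm
  have hball : ∀ δ > 0, ∀ᶠ z : Plane in nhdsWithin 0 {0}ᶜ, z ≠ 0 ∧ ‖z‖ < δ := fun δ hδ => by
    filter_upwards [self_mem_nhdsWithin, nhdsWithin_le_nhds (ball_mem_nhds (0 : Plane) hδ)]
      with z h1 h2 using ⟨h1, by simpa using h2⟩
  refine tendsto_order.2 ⟨fun a ha => ?_, fun a ha => ?_⟩
  · obtain ⟨δ, K, hδ, hb⟩ := h.lower_growth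
    filter_upwards [hball δ hδ, hlog.eventually_gt_atTop 0,
      hlog.eventually_gt_atTop (K / (logCoeff ψ - a))] with z hz h0 h1
    rw [lt_div_iff₀ h0]
    rw [div_lt_iff₀ (sub_pos.2 ha)] at h1
    linarith [hb z hz.1 hz.2]
  · obtain ⟨δ, K, hδ, hb⟩ := h.upper_growth hC (half_pos (sub_pos.2 ha)) hexp
    filter_upwards [hball δ hδ, hlog.eventually_gt_atTop 0,
      hlog.eventually_gt_atTop (K / ((a - logCoeff ψ) / 2))] with z hz h0 h1
    rw [div_lt_iff₀ h0]
    rw [div_lt_iff₀ (half_pos (sub_pos.2 ha))] at h1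
    linarith [hb z hz.1 hz.2]

end IsProfile

/-! ### Regularity of logarithmic potentials -/

/-- The (regularized, if `0 < e`) gradient of the logarithmic kernel. -/
noncomputable def gradLog (e : ℝ) (x : Plane) : Plane →L[ℝ] ℝ := (‖x‖ ^ 2 + e)⁻¹ • innerSL ℝ x

theorem hasFDerivAt_logReg {c : ℝ} (hc : 0 < c) (x : Plane) :
    HasFDerivAt (logReg c) (gradLog (1 / c ^ 2) x) x := by
  have hp : 0 < ‖x‖ ^ 2 + 1 / c ^ 2 := by positivity
  have h1 := (((hasStrictFDerivAt_norm_sq x).hasFDerivAt.add_const (1 / c ^ 2)).log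
    hp.ne').mul_const (1 / 2 : ℝ)
  have e : logReg c = fun x => Real.log (‖x‖ ^ 2 + 1 / c ^ 2) * (1 / 2 : ℝ) := by
    ext x
    simp [logReg, div_eq_mul_inv]
  rw [e]
  convert! h1 using 1
  ext y
  simp [gradLog]
  ring

theorem norm_gradLog (e : ℝ) (x : Plane) : ‖gradLog e x‖ = |(‖x‖ ^ 2 + e)⁻¹| * ‖x‖ := by
  rw [gradLog, norm_smul, innerSL_apply_norm, Real.norm_eq_abs]

theorem norm_gradLog_le {c : ℝ} (hc : 0 < c) (x : Plane) : ‖gradLog (1 / c ^ 2) x‖ ≤ c := by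
  rw [norm_gradLog, abs_of_pos (by positivity), inv_mul_le_iff₀ (by positivity)]
  have : (‖x‖ ^ 2 + 1 / c ^ 2) * c = ((c * ‖x‖) ^ 2 + 1) / c := by field_simp
  rw [this, le_div_iff₀ hc]
  nlinarith [sq_nonneg (c * ‖x‖ - 1)]

theorem norm_gradLog_sub_le {c : ℝ} (hc : 0 < c) {x : Plane} (hx : x ≠ 0) :
    ‖gradLog (1 / c ^ 2) x - gradLog 0 x‖ ≤ ‖x‖ ^ (-(3 / 2) : ℝ) * (1 / √c) := by
  have ht : 0 < ‖x‖ := norm_pos_iff.2 hx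
  set t := ‖x‖ with htdef
  have h1 : t ^ (-(3 / 2) : ℝ) * (1 / √c) = 1 / (t * √(c * t)) := by
    rw [Real.rpow_neg ht.le, show (3 / 2 : ℝ) = 1 + 1 / 2 by norm_num, Real.rpow_add ht,
      Real.rpow_one, ← Real.sqrt_eq_rpow, Real.sqrt_mul hc.le]
    field_simp
  have h2 : (t ^ 2 + 1 / c ^ 2)⁻¹ - (t ^ 2 + 0)⁻¹ = -(1 / (t ^ 2 * ((c * t) ^ 2 + 1))) := by
    field_simp
    ring
  have h3 : √(c * t) ≤ (c * t) ^ 2 + 1 := by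
    have a := Real.sq_sqrt (by positivity : 0 ≤ c * t)
    nlinarith [sq_nonneg (√(c * t) - 1), sq_nonneg (c * t - 1), Real.sqrt_nonneg (c * t)]
  have h4 : gradLog (1 / c ^ 2) x - gradLog 0 x =
      ((t ^ 2 + 1 / c ^ 2)⁻¹ - (t ^ 2 + 0)⁻¹) • innerSL ℝ x := (sub_smul _ _ _).symm
  rw [h4, norm_smul, innerSL_apply_norm, ← htdef, h2, h1, norm_neg,
    Real.norm_of_nonneg (by positivity)]
  calc 1 / (t ^ 2 * ((c * t) ^ 2 + 1)) * t = 1 / (t * ((c * t) ^ 2 + 1)) := by field_simp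
    _ ≤ _ := by gcongr

theorem continuous_gradLog {e : ℝ} (he : 0 < e) : Continuous (gradLog e) := by
  have h : Continuous fun x : Plane => (‖x‖ ^ 2 + e)⁻¹ :=
    Continuous.inv₀ (by fun_prop) fun x => by positivity
  exact h.smul (innerSL ℝ).continuous

theorem measurable_norm_sq_inv (e : ℝ) : Measurable fun x : Plane => (‖x‖ ^ 2 + e)⁻¹ := by
  fun_prop

theorem stronglyMeasurable_gradLog (e : ℝ) : StronglyMeasurable (gradLog e) :=
  (measurable_norm_sq_inv e).stronglyMeasurable.smul (innerSL ℝ).continuous.stronglyMeasurable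

theorem rpow_mul_rpow_le_add {x y p q : ℝ} (hx : 0 < x) (hy : 0 < y) (hp : p ≤ 0) (hq : q ≤ 0) :
    x ^ p * y ^ q ≤ x ^ (p + q) + y ^ (p + q) := by
  rcases le_total x y with h | h
  · calc x ^ p * y ^ q ≤ x ^ p * x ^ q := by
          exact mul_le_mul_of_nonneg_left (Real.rpow_le_rpow_of_nonpos hx h hq) (by positivity)
      _ = x ^ (p + q) := (Real.rpow_add hx p q).symm
      _ ≤ _ := le_add_of_nonneg_right (by positivity)
  · calc x ^ p * y ^ q ≤ y ^ p * y ^ q := by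
          exact mul_le_mul_of_nonneg_right (Real.rpow_le_rpow_of_nonpos hy h hp) (by positivity)
      _ = y ^ (p + q) := (Real.rpow_add hy p q).symm
      _ ≤ _ := le_add_of_nonneg_left (by positivity)

/-- A density supported in `|w| ≤ 1/2`, with a mild singularity at the origin. -/
structure IsMild (F : Plane → ℝ) (A : ℝ) : Prop where
  integrable : Integrable F
  supp : ∀ w, 1 / 2 < ‖w‖ → F w = 0
  bound : ∀ w, w ≠ 0 → |F w| ≤ A * ‖w‖ ^ (-(1 / 4) : ℝ)

namespace IsMild

variable {F : Plane → ℝ} {A : ℝ}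

theorem nonneg (h : IsMild F A) : 0 ≤ A := by
  obtain ⟨w, hw⟩ := exists_ne (0 : Plane)
  have hn : 0 < ‖w‖ := norm_pos_iff.2 hw
  exact nonneg_of_mul_nonneg_left ((abs_nonneg _).trans (h.bound w hw)) (by positivity)

theorem ae_ne (z : Plane) : ∀ᵐ w : Plane, z - w ≠ 0 := by
  have : ∀ᵐ w : Plane, w ≠ z := by simp [ae_iff, measure_singleton]
  filter_upwards [this] with w hw using sub_ne_zero.2 hw.symm

theorem exists_bound (h : IsMild F A) :
    ∃ B, ∀ z, Integrable (fun w => |F w| * ‖z - w‖ ^ (-(3 / 2) : ℝ)) ∧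
      ∫ w, |F w| * ‖z - w‖ ^ (-(3 / 2) : ℝ) ≤ B := by
  have hA := h.nonneg
  have hi1 := integrableOn_ball_rpow (α := 7 / 4) (by norm_num) 1
  set S : Plane → ℝ := (ball 0 1).indicator fun w => 1 + ‖w‖ ^ (-(7 / 4) : ℝ)
  have hS : Integrable S := (integrable_indicator_iff measurableSet_ball).2
    ((integrableOn_const (by finiteness)).add hi1)
  have hS0 : ∀ w, 0 ≤ S w := fun w => Set.indicator_nonneg (fun _ _ => by positivity) w
  refine ⟨A * ((∫ w, S w) + ∫ x in ball (0 : Plane) 1, ‖x‖ ^ (-(7 / 4) : ℝ)), fun z => ?_⟩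
  set T : Plane → ℝ := (ball z 1).indicator fun w => ‖z - w‖ ^ (-(7 / 4) : ℝ) with hT
  have hTi : Integrable T := (integrable_indicator_iff measurableSet_ball).2
    (integrableOn_ball_comp_sub hi1 z)
  have hT0 : ∀ w, 0 ≤ T w := fun w => Set.indicator_nonneg (fun _ _ => by positivity) w
  have hTT : ∫ w, T w = ∫ x in ball (0 : Plane) 1, ‖x‖ ^ (-(7 / 4) : ℝ) :=
    integral_indicator_ball_comp_sub (fun x => ‖x‖ ^ (-(7 / 4) : ℝ)) z 1
  have hle : ∀ᵐ w, |F w| * ‖z - w‖ ^ (-(3 / 2) : ℝ) ≤ A * (S w + T w) := by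
    filter_upwards [ae_ne_zero, ae_ne z] with w hw hzw
    by_cases hw1 : 1 / 2 < ‖w‖
    · rw [h.supp w hw1, abs_zero, zero_mul]
      exact mul_nonneg hA (add_nonneg (hS0 w) (hT0 w))
    have hn : 0 < ‖w‖ := norm_pos_iff.2 hw
    have hzn : 0 < ‖z - w‖ := norm_pos_iff.2 hzw
    have e1 : S w = 1 + ‖w‖ ^ (-(7 / 4) : ℝ) :=
      Set.indicator_of_mem (by simp only [mem_ball, dist_zero_right]; linarith) _
    refine (mul_le_mul_of_nonneg_right (h.bound w hw) (by positivity)).trans ?_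
    rw [mul_assoc]
    refine mul_le_mul_of_nonneg_left ?_ hA
    by_cases hwz : w ∈ ball z 1
    · have e2 : T w = ‖z - w‖ ^ (-(7 / 4) : ℝ) := Set.indicator_of_mem hwz _
      have := rpow_mul_rpow_le_add (p := -(1 / 4)) (q := -(3 / 2)) hn hzn
        (by norm_num) (by norm_num)
      rw [show (-(1 / 4) + -(3 / 2) : ℝ) = -(7 / 4) by norm_num] at this
      rw [e1, e2]
      linarith
    · have hge : 1 ≤ ‖z - w‖ := by simpa [dist_eq_norm, norm_sub_rev] using hwz
      calc ‖w‖ ^ (-(1 / 4) : ℝ) * ‖z - w‖ ^ (-(3 / 2) : ℝ)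
          ≤ ‖w‖ ^ (-(7 / 4) : ℝ) * 1 := by
            gcongr ?_ * ?_
            · exact Real.rpow_le_rpow_of_exponent_ge hn (by linarith) (by norm_num)
            · exact Real.rpow_le_one_of_one_le_of_nonpos hge (by norm_num)
        _ ≤ S w + T w := by
            rw [e1]
            linarith [hT0 w]
  have hi : Integrable (fun w => |F w| * ‖z - w‖ ^ (-(3 / 2) : ℝ)) := by
    refine ((hS.add hTi).const_mul A).mono' ?_ ?_
    · exact h.integrable.abs.aestronglyMeasurable.mul
        (Measurable.aestronglyMeasurable (by fun_prop))
    · filter_upwards [hle] with w hw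
      rwa [Real.norm_of_nonneg (by positivity)]
  refine ⟨hi, (integral_mono_ae hi ((hS.add hTi).const_mul A) hle).trans_eq ?_⟩
  rw [integral_const_mul, ← hTT]
  congr 1
  exact integral_add hS hTi

theorem integrable_mul_log (h : IsMild F A) (z : Plane) :
    Integrable fun w => F w * Real.log ‖z - w‖ := by
  obtain ⟨B, hB⟩ := h.exists_bound
  refine (((hB z).1.const_mul 2).add (h.integrable.abs.mul_const (‖z‖ + 1))).mono'
    (h.integrable.aestronglyMeasurable.mul (Measurable.aestronglyMeasurable (by fun_prop))) ?_
  filter_upwards [ae_ne z] with w hzw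
  have hzn : 0 < ‖z - w‖ := norm_pos_iff.2 hzw
  by_cases hw1 : 1 / 2 < ‖w‖
  · simp [h.supp w hw1]
  rw [Real.norm_eq_abs, abs_mul]
  have h0 : 0 ≤ ‖z - w‖ ^ (-(3 / 2) : ℝ) := by positivity
  have key : |Real.log ‖z - w‖| ≤ 2 * ‖z - w‖ ^ (-(3 / 2) : ℝ) + (‖z‖ + 1) := by
    rcases le_total ‖z - w‖ 1 with hle | hle
    · have h1 := abs_log_le_rpow hzn.le hle
      have h2 : ‖z - w‖ ^ (-(1 / 2) : ℝ) ≤ ‖z - w‖ ^ (-(3 / 2) : ℝ) :=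
        Real.rpow_le_rpow_of_exponent_ge hzn hle (by norm_num)
      linarith [norm_nonneg z]
    · have h1 := abs_log_le_of_far one_pos hle le_rfl
      rw [Real.log_one, abs_zero] at h1
      linarith [norm_sub_le z w]
  calc |F w| * |Real.log ‖z - w‖|
      ≤ |F w| * (2 * ‖z - w‖ ^ (-(3 / 2) : ℝ) + (‖z‖ + 1)) :=
        mul_le_mul_of_nonneg_left key (abs_nonneg _)
    _ = _ := by
        simp only [Pi.add_apply]
        ring

theorem integrable_smul_gradLog (h : IsMild F A) {c : ℝ} (hc : 0 < c) (z : Plane) :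
    Integrable fun w => F w • gradLog (1 / c ^ 2) (z - w) := by
  refine (h.integrable.abs.mul_const c).mono' (h.integrable.aestronglyMeasurable.smul
    ((stronglyMeasurable_gradLog _).comp_measurable (by fun_prop)).aestronglyMeasurable)
    (Eventually.of_forall fun w => ?_)
  rw [norm_smul, Real.norm_eq_abs]
  exact mul_le_mul_of_nonneg_left (norm_gradLog_le hc _) (abs_nonneg _)

theorem hasFDerivAt_regularized (h : IsMild F A) {c : ℝ} (hc : 1 ≤ c) (z : Plane) :
    HasFDerivAt (fun z => ∫ w, F w * logReg c (z - w))
      (∫ w, F w • gradLog (1 / c ^ 2) (z - w)) z := by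
  have hc0 : 0 < c := by linarith
  have hm (z : Plane) : AEStronglyMeasurable (fun w => F w * logReg c (z - w)) volume :=
    h.integrable.aestronglyMeasurable.mul ((contDiff_logReg hc0).continuous.comp
      (by fun_prop : Continuous fun w => z - w)).aestronglyMeasurable
  refine hasFDerivAt_integral_of_dominated_of_fderiv_le (s := Set.univ)
    (F := fun z w => F w * logReg c (z - w)) (F' := fun z w => F w • gradLog (1 / c ^ 2) (z - w))
    (bound := fun w => |F w| * c) univ_mem (Eventually.of_forall hm) ?_
    (h.integrable_smul_gradLog hc0 z).aestronglyMeasurable ?_ (h.integrable.abs.mul_const c) ?_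
  · refine ((h.integrable_mul_log z).abs.add (h.integrable.abs.mul_const (‖z‖ + 1))).mono'
      (hm z) ?_
    filter_upwards [ae_ne z] with w hw
    by_cases hw1 : 1 / 2 < ‖w‖
    · simp [h.supp w hw1]
    simp only [Pi.add_apply]
    rw [Real.norm_eq_abs, abs_mul, abs_mul, ← mul_add]
    refine mul_le_mul_of_nonneg_left ?_ (abs_nonneg _)
    linarith [abs_logReg_le hc hw, norm_sub_le z w]
  · refine Eventually.of_forall fun w x _ => ?_
    rw [norm_smul, Real.norm_eq_abs]
    exact mul_le_mul_of_nonneg_left (norm_gradLog_le hc0 _) (abs_nonneg _)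
  · refine Eventually.of_forall fun w x _ => ?_
    have h1 := (hasFDerivAt_logReg hc0 (x - w)).comp x ((hasFDerivAt_id x).sub_const w)
    exact h1.const_mul (F w)

theorem continuous_regularized (h : IsMild F A) {c : ℝ} (hc : 0 < c) :
    Continuous fun z => ∫ w, F w • gradLog (1 / c ^ 2) (z - w) := by
  refine continuous_of_dominated (bound := fun w => |F w| * c)
    (fun z => (h.integrable_smul_gradLog hc z).aestronglyMeasurable) (fun z => ?_)
    (h.integrable.abs.mul_const c) ?_
  · refine Eventually.of_forall fun w => ?_
    rw [norm_smul, Real.norm_eq_abs]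
    exact mul_le_mul_of_nonneg_left (norm_gradLog_le hc _) (abs_nonneg _)
  · refine Eventually.of_forall fun w => ?_
    exact ((continuous_gradLog (by positivity)).comp (by fun_prop)).const_smul (F w)

theorem contDiff_potential (h : IsMild F A) :
    ContDiff ℝ 1 fun z => ∫ w, F w * Real.log ‖z - w‖ := by
  obtain ⟨B, hB⟩ := h.exists_bound
  have hc (n : ℕ) : (0 : ℝ) < n + 1 := by positivity
  have hdist (n : ℕ) (z : Plane) :
      ‖(∫ w, F w • gradLog 0 (z - w)) - ∫ w, F w • gradLog (1 / ((n : ℝ) + 1) ^ 2) (z - w)‖ ≤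
        B * (1 / √((n : ℝ) + 1)) := by
    have hb : ∀ᵐ w, ‖F w • gradLog (1 / ((n : ℝ) + 1) ^ 2) (z - w) - F w • gradLog 0 (z - w)‖ ≤
        |F w| * ‖z - w‖ ^ (-(3 / 2) : ℝ) * (1 / √((n : ℝ) + 1)) := by
      filter_upwards [ae_ne z] with w hw
      have e : F w • gradLog (1 / ((n : ℝ) + 1) ^ 2) (z - w) - F w • gradLog 0 (z - w) =
          F w • (gradLog (1 / ((n : ℝ) + 1) ^ 2) (z - w) - gradLog 0 (z - w)) :=
        (smul_sub _ _ _).symm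
      rw [e, norm_smul, Real.norm_eq_abs, mul_assoc]
      exact mul_le_mul_of_nonneg_left (norm_gradLog_sub_le (hc n) hw) (abs_nonneg _)
    have hi := (hB z).1.mul_const (1 / √((n : ℝ) + 1))
    have hd : Integrable fun w =>
        F w • gradLog (1 / ((n : ℝ) + 1) ^ 2) (z - w) - F w • gradLog 0 (z - w) := by
      refine hi.mono' ((h.integrable_smul_gradLog (hc n) z).aestronglyMeasurable.sub
        (h.integrable.aestronglyMeasurable.smul
          ((stronglyMeasurable_gradLog _).comp_measurable (by fun_prop)).aestronglyMeasurable)) hb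
    have h0 : Integrable fun w => F w • gradLog 0 (z - w) := by
      refine ((h.integrable_smul_gradLog (hc n) z).sub hd).congr (Eventually.of_forall fun w => ?_)
      exact sub_sub_cancel _ _
    rw [norm_sub_rev, ← integral_sub (h.integrable_smul_gradLog (hc n) z) h0]
    refine (norm_integral_le_of_norm_le hi hb).trans ?_
    rw [integral_mul_const]
    exact mul_le_mul_of_nonneg_right (hB z).2 (by positivity)
  have hunif : TendstoUniformly
      (fun (n : ℕ) z => ∫ w, F w • gradLog (1 / ((n : ℝ) + 1) ^ 2) (z - w))
      (fun z => ∫ w, F w • gradLog 0 (z - w)) atTop := by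
    have ht : Tendsto (fun n : ℕ => B * (1 / √((n : ℝ) + 1))) atTop (nhds 0) := by
      have := Real.continuous_sqrt.continuousAt.tendsto.comp
        (tendsto_one_div_add_atTop_nhds_zero_nat (𝕜 := ℝ))
      simpa using this.const_mul B
    rw [Metric.tendstoUniformly_iff]
    intro ε hε
    filter_upwards [ht.eventually (gt_mem_nhds hε)] with n hn z
    rw [dist_eq_norm]
    exact (hdist n z).trans_lt hn
  rw [contDiff_one_iff_hasFDerivAt]
  refine ⟨fun z => ∫ w, F w • gradLog 0 (z - w), ?_, fun z => ?_⟩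
  · exact hunif.continuous (Frequently.of_forall fun n => h.continuous_regularized (hc n))
  · exact hasFDerivAt_of_tendstoUniformly hunif
      (fun n x => h.hasFDerivAt_regularized (by simp) x)
      (fun x => tendsto_integral_mul_logReg h.integrable h.supp (h.integrable_mul_log x)) z

end IsMild

namespace IsProfile

variable {ψ : Plane → ℝ} {r : ℝ}

theorem isMild (h : IsProfile ψ r) {C : ℝ} (hC : 0 ≤ C)
    (hexp : ∀ z, z ≠ 0 → ‖z‖ < r → -lap ψ z ≤ C * Real.exp (2 * ψ z)) (h0 : logCoeff ψ = 0) :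
    ∃ A, IsMild (lap ψ) A := by
  obtain ⟨δ, K, hδ, hb⟩ := h.upper_growth (η := 1 / 8) hC (by norm_num) hexp
  have hρ : 0 < min δ r := lt_min hδ h.pos
  obtain ⟨B, hB⟩ := ((isCompact_closedBall (0 : Plane) 1).diff
    (isOpen_ball (x := 0) (ε := min δ r))).exists_bound_of_continuousOn (f := lap ψ)
    fun z hz => by
      refine (h.continuousAt_lap ?_).continuousWithinAt
      rintro rfl
      exact hz.2 (mem_ball_self hρ)
  refine ⟨max B (C * Real.exp (2 * K)), h.integrable_lap, fun w hw => h.lap_eq_zero hw,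
    fun z hz => ?_⟩
  have hn : 0 < ‖z‖ := norm_pos_iff.2 hz
  have hpow : 0 < ‖z‖ ^ (-(1 / 4) : ℝ) := by positivity
  have hM : 0 ≤ max B (C * Real.exp (2 * K)) := le_max_of_le_right (by positivity)
  rcases lt_or_ge ‖z‖ (min δ r) with hlt | hge
  · have hzδ := hlt.trans_le (min_le_left _ _)
    have hzr := hlt.trans_le (min_le_right _ _)
    rw [abs_of_nonpos (h.superharmonic z hz hzr)]
    have h1 := hb z hz hzδ
    rw [h0] at h1
    calc -lap ψ z ≤ C * Real.exp (2 * ψ z) := hexp z hz hzr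
      _ ≤ C * Real.exp (2 * K + Real.log ‖z‖ * -(1 / 4)) := by
          gcongr
          linarith
      _ = C * Real.exp (2 * K) * ‖z‖ ^ (-(1 / 4) : ℝ) := by
          rw [Real.exp_add, Real.rpow_def_of_pos hn, mul_assoc]
      _ ≤ _ := by
          gcongr
          exact le_max_right _ _
  · rcases lt_or_ge (1 / 2) ‖z‖ with hz1 | hz1
    · rw [h.lap_eq_zero hz1, abs_zero]
      positivity
    · have h1 := hB z ⟨mem_closedBall_zero_iff.2 (by linarith),
        fun hzb => (mem_ball_zero_iff.1 hzb).not_ge hge⟩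
      calc |lap ψ z| ≤ max B (C * Real.exp (2 * K)) * 1 := by
            rw [mul_one]
            exact h1.trans (le_max_left _ _)
        _ ≤ _ := mul_le_mul_of_nonneg_left
            (Real.one_le_rpow_of_pos_of_le_one_of_nonpos hn (by linarith) (by norm_num)) hM

theorem exists_contDiff_extension (h : IsProfile ψ r) {C : ℝ} (hC : 0 ≤ C)
    (hexp : ∀ z, z ≠ 0 → ‖z‖ < r → -lap ψ z ≤ C * Real.exp (2 * ψ z)) (h0 : logCoeff ψ = 0) :
    ∃ g : Plane → ℝ, ContDiff ℝ 1 g ∧ ∀ z, z ≠ 0 → ψ z = g z := by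
  obtain ⟨A, hA⟩ := h.isMild hC hexp h0
  have hc := integral_bubble_pos
  have hi : ∫ w, lap ψ w = 0 := by
    rw [logCoeff, div_eq_zero_iff] at h0
    exact h0.resolve_right hc.ne'
  refine ⟨_, hA.contDiff_potential.div_const (∫ x, bubble x), fun z hz => ?_⟩
  rw [eq_div_iff hc.ne', mul_comm, h.representation hz, hi, zero_mul, sub_zero]

/-- Cutting off a positive superharmonic function on a punctured disk gives a profile. -/
theorem exists_of_contDiffOn {R : ℝ} (hR : 0 < R) {v : Plane → ℝ}
    (hv : ContDiffOn ℝ 2 v {z | 0 < ‖z‖ ∧ ‖z‖ < R}) (hpos : ∀ z, 0 < ‖z‖ → ‖z‖ < R → 0 < v z)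
    (hlap : ∀ z, 0 < ‖z‖ → ‖z‖ < R → 0 ≤ -lap v z) :
    ∃ ψ r, IsProfile ψ r ∧ r ≤ R ∧ ∀ z ∈ ball (0 : Plane) r, ψ z = v z := by
  set ρ := min R 1
  have hρ : 0 < ρ := lt_min hR one_pos
  have hρR : ρ ≤ R := min_le_left _ _
  have hρ1 : ρ ≤ 1 := min_le_right _ _
  let χ : ContDiffBump (0 : Plane) := ⟨ρ / 4, ρ / 2, by positivity, by linarith⟩
  have hχ0 : ∀ z, ρ / 2 ≤ ‖z‖ → χ z = 0 := fun z hz => χ.zero_of_le_dist (by simpa using hz)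
  have heq : ∀ z ∈ ball (0 : Plane) (ρ / 4), χ z * v z = v z := fun z hz => by
    rw [χ.one_of_mem_closedBall (ball_subset_closedBall hz), one_mul]
  have hopen : IsOpen {z : Plane | 0 < ‖z‖ ∧ ‖z‖ < R} :=
    (isOpen_lt continuous_const continuous_norm).inter (isOpen_lt continuous_norm continuous_const)
  refine ⟨fun z => χ z * v z, ρ / 4, ⟨by positivity, fun z hz => ?_, fun z hz => ?_, fun z hz => ?_,
    fun z hz hzr => ?_⟩, by linarith, heq⟩
  · rcases lt_or_ge ‖z‖ R with hzR | hzR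
    · exact χ.contDiffAt.mul (hv.contDiffAt (hopen.mem_nhds ⟨norm_pos_iff.2 hz, hzR⟩))
    · have : (fun z => χ z * v z) =ᶠ[nhds z] fun _ => 0 := by
        filter_upwards [continuous_norm.continuousAt.eventually
          (lt_mem_nhds (show ρ / 2 < ‖z‖ by linarith))] with w hw
        rw [hχ0 w hw.le, zero_mul]
      exact contDiffAt_const.congr_of_eventuallyEq this
  · rcases lt_or_ge ‖z‖ R with hzR | hzR
    · exact mul_nonneg χ.nonneg (hpos z (norm_pos_iff.2 hz) hzR).le
    · simp [hχ0 z (by linarith)]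
  · simp [hχ0 z (by linarith)]
  · have : (fun z => χ z * v z) =ᶠ[nhds z] v :=
      Filter.eventuallyEq_of_mem (isOpen_ball.mem_nhds (by simpa using hzr)) heq
    rw [lap_congr this]
    linarith [hlap z (norm_pos_iff.2 hz) (by linarith)]

end IsProfile

/-- (Taliaferro) Let `v` be a `C²` positive solution of `0 ≤ -Δv ≤ C e^{2v}` on a
punctured disk `{0 < |z| < R}` around the origin of `ℝ²`. Then either `v` extends to a
`C¹` function on a neighborhood of the origin, or `v(z)/log(1/|z|) → m₁` as `|z| → 0⁺`
for some finite positive number `m₁`. -/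
theorem taliaferro_dichotomy_positive
    (R C : ℝ) (hR : 0 < R) (hC : 0 < C)
    (v : EuclideanSpace ℝ (Fin 2) → ℝ)
    (hv : ContDiffOn ℝ 2 v {z | 0 < ‖z‖ ∧ ‖z‖ < R})
    (hpos : ∀ z : EuclideanSpace ℝ (Fin 2), 0 < ‖z‖ → ‖z‖ < R → 0 < v z)
    (hineq : ∀ z : EuclideanSpace ℝ (Fin 2), 0 < ‖z‖ → ‖z‖ < R →
      0 ≤ -lap v z ∧ -lap v z ≤ C * Real.exp (2 * v z)) :
    (∃ ε : ℝ, ∃ g : EuclideanSpace ℝ (Fin 2) → ℝ, 0 < ε ∧ ε ≤ R ∧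
        ContDiffOn ℝ 1 g (ball (0 : EuclideanSpace ℝ (Fin 2)) ε) ∧
        Set.EqOn v g (ball (0 : EuclideanSpace ℝ (Fin 2)) ε \ {0})) ∨
    (∃ m₁ : ℝ, 0 < m₁ ∧
      Tendsto (fun z => v z / Real.log (1 / ‖z‖))
        (nhdsWithin (0 : EuclideanSpace ℝ (Fin 2)) {0}ᶜ) (nhds m₁)) := by
  obtain ⟨ψ, r, h, hrR, heq⟩ := IsProfile.exists_of_contDiffOn hR hv hpos
    fun z h1 h2 => (hineq z h1 h2).1
  have hexp : ∀ z, z ≠ 0 → ‖z‖ < r → -lap ψ z ≤ C * Real.exp (2 * ψ z) := fun z hz hzr => by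
    have hzb : z ∈ ball (0 : Plane) r := by simpa using hzr
    rw [lap_congr (Filter.eventuallyEq_of_mem (isOpen_ball.mem_nhds hzb) heq), heq z hzb]
    exact (hineq z (norm_pos_iff.2 hz) (hzr.trans_le hrR)).2
  have hlim := h.tendsto_div_log hC.le hexp
  have hm : 0 ≤ IsProfile.logCoeff ψ := by
    refine ge_of_tendsto hlim ?_
    filter_upwards [self_mem_nhdsWithin, IsProfile.tendsto_neg_log_norm.eventually_ge_atTop 0]
      with z h1 h2 using div_nonneg (h.nonneg z h1) h2
  rcases hm.eq_or_lt with h0 | h0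
  · obtain ⟨g, hg, hψg⟩ := h.exists_contDiff_extension hC.le hexp h0.symm
    exact Or.inl ⟨r, g, h.pos, hrR, hg.contDiffOn, fun z hz => (heq z hz.1).symm.trans
      (hψg z hz.2)⟩
  · refine Or.inr ⟨_, h0, hlim.congr' ?_⟩
    filter_upwards [nhdsWithin_le_nhds (ball_mem_nhds (0 : Plane) h.pos)] with z hz
    rw [heq z hz, one_div, Real.log_inv]
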